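/- Let X be a locally connected continuum contained in the Euclidean plane ℝ². Then X has the fixed point property if and only if X has the periodic point property. -/

import Mathlib

/-- A space has the fixed point property: every continuous self-map has a fixed point. -/
def HasFPP (Y : Type*) [TopologicalSpace Y] : Prop :=
  ∀ f : Y → Y, Continuous f → ∃ x, f x = x

/-- A space has the periodic point property: every continuous self-map has a periodic point. -/
def HasPPP (Y : Type*) [TopologicalSpace Y] : Prop :=
  ∀ f : Y → Y, Continuous f → ∃ x, ∃ n : ℕ, 1 ≤ n ∧ f^[n] x = x

/-- Local fixed point property: there is an open basis whose members have closures with FPP. -/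
def HasLFPP (Y : Type*) [TopologicalSpace Y] : Prop :=
  ∃ 𝓑 : Set (Set Y), TopologicalSpace.IsTopologicalBasis 𝓑 ∧
    ∀ B ∈ 𝓑, HasFPP ↥(closure B)

/-- Weak local fixed point property. -/
def HasWLFPP (Y : Type*) [TopologicalSpace Y] : Prop :=
  ∃ 𝓑 : Set (Set Y), TopologicalSpace.IsTopologicalBasis 𝓑 ∧
    ∀ B ∈ 𝓑, ∀ f : Y → Y, Continuous f → f '' closure B ⊆ B → ∃ x ∈ B, f x = x

/-- Local periodic point property. -/
def HasLPPP (Y : Type*) [TopologicalSpace Y] : Prop :=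
  ∃ 𝓑 : Set (Set Y), TopologicalSpace.IsTopologicalBasis 𝓑 ∧
    ∀ B ∈ 𝓑, HasPPP ↥(closure B)

/-- Weak local periodic point property. -/
def HasWLPPP (Y : Type*) [TopologicalSpace Y] : Prop :=
  ∃ 𝓑 : Set (Set Y), TopologicalSpace.IsTopologicalBasis 𝓑 ∧
    ∀ B ∈ 𝓑, ∀ f : Y → Y, Continuous f → f '' closure B ⊆ B →
      ∃ x ∈ B, ∃ n : ℕ, 1 ≤ n ∧ f^[n] x = x

/-- A subset is a simple closed curve if it is homeomorphic to the unit circle. -/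
def IsSimpleClosedCurve {α : Type*} [TopologicalSpace α] (S : Set α) : Prop :=
  Nonempty (↥S ≃ₜ ↥(Metric.sphere (0 : EuclideanSpace ℝ (Fin 2)) 1))

/-- Covering dimension at most `n`: every finite open cover admits an open shrinking
of order at most `n + 1`. -/
def CoveringDimLE (Y : Type*) [TopologicalSpace Y] (n : ℕ) : Prop :=
  ∀ (ι : Type) [Finite ι] (U : ι → Set Y), (∀ i, IsOpen (U i)) → (⋃ i, U i) = Set.univ →
    ∃ V : ι → Set Y, (∀ i, IsOpen (V i)) ∧ (∀ i, V i ⊆ U i) ∧ (⋃ i, V i) = Set.univ ∧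
      ∀ y : Y, {i | y ∈ V i}.ncard ≤ n + 1

/-- A dendrite: a locally connected (metric) continuum containing no simple closed curve. -/
def IsDendrite {α : Type*} [TopologicalSpace α] (D : Set α) : Prop :=
  IsCompact D ∧ IsConnected D ∧ LocallyConnectedSpace ↥D ∧ ∀ S ⊆ D, ¬ IsSimpleClosedCurve S

/-- A local dendrite: every point has a closed neighborhood which is a dendrite. -/
def IsLocalDendrite (Y : Type*) [TopologicalSpace Y] : Prop :=
  ∀ y : Y, ∃ N : Set Y, N ∈ nhds y ∧ IsClosed N ∧ IsDendrite N

/-!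
The fixed point property trivially implies the periodic point property. For the converse, regard
the continuum `X` as a subset of `ℂ`.

If, for every `p ∉ X`, the function `z ↦ z - p` has a continuous logarithm on `X`, then by
Eilenberg's theorem every nonvanishing continuous function on `X` has one. A self-map `f` of `X`
without fixed points is then impossible: for `p ∈ X`, logarithms of `x - f x` and of
`x ↦ (z - x)` yield one of `z - p` on the part of a neighbourhood of `X` outside `X`, whereas
`z - p` has no logarithm on the frontier of a bounded neighbourhood of `p`.

If some `z - p` with `p ∉ X` has no continuous logarithm on `X`, then `X`, being path connected,
contains a path along which the logarithm of `z - p` changes by a nonzero multiple of `2πi`. Among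
the pieces of an injective lift of such a path, a shortest one with equal values at its ends traces
a simple closed curve winding exactly once around `p`. By Tietze's theorem `X` retracts onto it, and
following the retraction by an irrational rotation gives a self-map of `X` without periodic points.
-/

open Set Filter Topology

/-! ### Continuous logarithms -/

/-- `g` has a continuous logarithm on `S`. -/
def HasLogOn {E : Type*} [TopologicalSpace E] (g : E → ℂ) (S : Set E) : Prop :=
  ∃ l : E → ℂ, ContinuousOn l S ∧ ∀ z ∈ S, Complex.exp (l z) = g z

theorem div_mem_slitPlane_of_norm_sub_lt {a b : ℂ} (h : ‖a - b‖ < ‖b‖) :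
    a / b ∈ Complex.slitPlane := by
  have hb : b ≠ 0 := norm_pos_iff.1 ((norm_nonneg _).trans_lt h)
  have hab : ‖a / b - 1‖ < 1 := by
    rwa [div_sub_one hb, norm_div, div_lt_one (norm_pos_iff.2 hb)]
  simpa using Complex.mem_slitPlane_of_norm_lt_one hab

theorem sub_div_sub_mem_slitPlane {z z₀ x : ℂ} (h : dist z z₀ < dist z₀ x) :
    (z - x) / (z₀ - x) ∈ Complex.slitPlane := by
  rw [dist_eq_norm, dist_eq_norm] at h
  exact div_mem_slitPlane_of_norm_sub_lt (by rwa [sub_sub_sub_cancel_right])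

theorem eq_of_exp_comp_const {E : Type*} [TopologicalSpace E] {S : Set E} {m : E → ℂ} {c : ℂ}
    (hS : IsPreconnected S) (hm : ContinuousOn m S) (hc : ∀ z ∈ S, Complex.exp (m z) = c)
    {x y : E} (hx : x ∈ S) (hy : y ∈ S) : m x = m y :=
  Complex.isCoveringMap_exp.constOn_of_comp hS hm
    (fun a ha b hb => Subtype.ext ((hc a ha).trans (hc b hb).symm)) hx hy

namespace HasLogOn

variable {E F : Type*} [TopologicalSpace E] [TopologicalSpace F] {g h : E → ℂ} {S T : Set E}

theorem ne_zero (hg : HasLogOn g S) {z : E} (hz : z ∈ S) : g z ≠ 0 := by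
  obtain ⟨l, -, hl⟩ := hg
  exact hl z hz ▸ Complex.exp_ne_zero _

theorem continuousOn (hg : HasLogOn g S) : ContinuousOn g S := by
  obtain ⟨l, hl, hlg⟩ := hg
  exact hl.cexp.congr fun z hz => (hlg z hz).symm

theorem mono (hg : HasLogOn g T) (hST : S ⊆ T) : HasLogOn g S := by
  obtain ⟨l, hl, hlg⟩ := hg
  exact ⟨l, hl.mono hST, fun z hz => hlg z (hST hz)⟩

theorem congr (hg : HasLogOn g S) (hgh : EqOn h g S) : HasLogOn h S := by
  obtain ⟨l, hl, hlg⟩ := hg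
  exact ⟨l, hl, fun z hz => (hlg z hz).trans (hgh hz).symm⟩

theorem comp (hg : HasLogOn g S) {φ : F → E} {T : Set F} (hφ : ContinuousOn φ T)
    (hmaps : MapsTo φ T S) : HasLogOn (fun z => g (φ z)) T := by
  obtain ⟨l, hl, hlg⟩ := hg
  exact ⟨l ∘ φ, hl.comp hφ hmaps, fun z hz => hlg _ (hmaps hz)⟩

theorem const {c : ℂ} (hc : c ≠ 0) : HasLogOn (fun _ : E => c) S :=
  ⟨fun _ => Complex.log c, continuousOn_const, fun _ _ => Complex.exp_log hc⟩

theorem mul (hg : HasLogOn g S) (hh : HasLogOn h S) : HasLogOn (fun z => g z * h z) S := by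
  obtain ⟨l, hl, hlg⟩ := hg
  obtain ⟨m, hm, hmh⟩ := hh
  exact ⟨fun z => l z + m z, hl.add hm, fun z hz => by
    rw [Complex.exp_add, hlg z hz, hmh z hz]⟩

theorem zpow (hg : HasLogOn g S) (n : ℤ) : HasLogOn (fun z => g z ^ n) S := by
  obtain ⟨l, hl, hlg⟩ := hg
  exact ⟨fun z => n * l z, hl.const_mul _, fun z hz => by rw [Complex.exp_int_mul, hlg z hz]⟩

theorem div (hg : HasLogOn g S) (hh : HasLogOn h S) : HasLogOn (fun z => g z / h z) S :=
  (hg.mul (hh.zpow (-1))).congr fun z _ => by simp only [zpow_neg_one, div_eq_mul_inv]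

theorem of_mem_slitPlane (hg : ContinuousOn g S) (h : ∀ z ∈ S, g z ∈ Complex.slitPlane) :
    HasLogOn g S :=
  ⟨fun z => Complex.log (g z), hg.clog h,
    fun z hz => Complex.exp_log (Complex.slitPlane_ne_zero (h z hz))⟩

theorem of_norm_sub_lt (hh : HasLogOn h S) (hg : ContinuousOn g S)
    (hgh : ∀ z ∈ S, ‖g z - h z‖ < ‖h z‖) : HasLogOn g S := by
  have hdiv : HasLogOn (fun z => g z / h z) S :=
    of_mem_slitPlane (hg.div hh.continuousOn fun z hz => hh.ne_zero hz)
      fun z hz => div_mem_slitPlane_of_norm_sub_lt (hgh z hz)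
  exact (hdiv.mul hh).congr fun z hz => (div_mul_cancel₀ _ (hh.ne_zero hz)).symm

theorem of_convex_isOpen {V : Type*} [NormedAddCommGroup V] [NormedSpace ℝ V] {g : V → ℂ}
    {S : Set V} (hconv : Convex ℝ S) (ho : IsOpen S) (hg : ContinuousOn g S)
    (h0 : ∀ z ∈ S, g z ≠ 0) : HasLogOn g S := by
  rcases S.eq_empty_or_nonempty with rfl | hne
  · exact ⟨0, continuousOn_empty _, fun _ hz => hz.elim⟩
  have := hconv.contractibleSpace hne
  have hS : IsSimplyConnected S := inferInstanceAs (SimplyConnectedSpace S)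
  exact Complex.exists_continuousOn_eqOn_exp_comp hS ho hg fun ⟨z, hz, hgz⟩ => h0 z hz hgz

/-- On `T` the function has a logarithm depending on the auxiliary variable as well; over
`V` that dependence disappears, because fibres of `V` lie in connected pieces of fibres of `T`. -/
theorem of_prod {g : E → ℂ} {W : Set E} {T V : Set (E × F)}
    (hT : HasLogOn (fun q => g q.1) T) (hV : ∀ z ∈ W, ∃ x, ∀ᶠ z' in 𝓝[W] z, (z', x) ∈ V)
    (hVT : ∀ z x y, (z, x) ∈ V → (z, y) ∈ V →
      ∃ A, IsPreconnected A ∧ x ∈ A ∧ y ∈ A ∧ ∀ a ∈ A, (z, a) ∈ T) :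
    HasLogOn g W := by
  obtain ⟨m, hm, hmg⟩ := hT
  have hsub : V ⊆ T := fun ⟨z, x⟩ hq => by
    obtain ⟨A, -, hx, -, hA⟩ := hVT z x x hq hq
    exact hA x hx
  have hindep : ∀ z x y, (z, x) ∈ V → (z, y) ∈ V → m (z, x) = m (z, y) := fun z x y hx hy => by
    obtain ⟨A, hA, hxA, hyA, hAT⟩ := hVT z x y hx hy
    exact eq_of_exp_comp_const (m := fun a => m (z, a)) (c := g z) hA
      (hm.comp (by fun_prop) hAT) (fun a ha => hmg _ (hAT a ha)) hxA hyA
  rcases W.eq_empty_or_nonempty with rfl | ⟨w, hw⟩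
  · exact ⟨0, continuousOn_empty _, fun _ hz => hz.elim⟩
  have : Nonempty F := (hV w hw).nonempty
  choose! s hs using hV
  have hsV : ∀ z ∈ W, (z, s z) ∈ V := fun z hz => (hs z hz).self_of_nhdsWithin hz
  refine ⟨fun z => m (z, s z), fun z₀ hz₀ => ?_, fun z hz => hmg _ (hsub (hsV z hz))⟩
  have hslice : ContinuousWithinAt (fun z => m (z, s z₀)) {z | (z, s z₀) ∈ V} z₀ :=
    (hm _ (hsub (hsV z₀ hz₀))).comp (f := fun z => (z, s z₀)) (by fun_prop) fun z hz => hsub hz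
  refine (hslice.mono_of_mem_nhdsWithin (hs z₀ hz₀)).congr_of_eventuallyEq ?_ rfl
  filter_upwards [hs z₀ hz₀, self_mem_nhdsWithin] with z hz hzW
  exact hindep z _ _ (hsV z hzW) hz

end HasLogOn

theorem not_hasLogOn_sub_sphere (p : ℂ) {r : ℝ} (hr : 0 < r) :
    ¬ HasLogOn (fun z => z - p) (Metric.sphere p r) := by
  rintro ⟨l, hl, hlp⟩
  have hmem : ∀ θ, circleMap p r θ ∈ Metric.sphere p r := circleMap_mem_sphere p hr.le
  have hcont : Continuous fun θ : ℝ => l (circleMap p r θ) - θ * Complex.I :=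
    (hl.comp_continuous (continuous_circleMap p r) hmem).sub (by fun_prop)
  have hexp : ∀ θ : ℝ, Complex.exp (l (circleMap p r θ) - θ * Complex.I) = r := fun θ => by
    simp only [Complex.exp_sub, hlp _ (hmem θ), circleMap_sub_center]
    rw [circleMap_zero, mul_div_cancel_right₀ _ (Complex.exp_ne_zero _)]
  have hends := eq_of_exp_comp_const isPreconnected_univ hcont.continuousOn (fun θ _ => hexp θ)
    (mem_univ 0) (mem_univ (2 * Real.pi))
  have hperiod : circleMap p r (2 * Real.pi) = circleMap p r 0 := by
    simpa using periodic_circleMap p r 0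
  rw [hperiod] at hends
  exact Complex.two_pi_I_ne_zero (by push_cast at hends; linear_combination hends)

theorem HasLogOn.exists_continuous_extension {E : Type*} [TopologicalSpace E] [NormalSpace E]
    {C : Set E} {g : E → ℂ} (hlog : HasLogOn g (frontier C)) (hg : ContinuousOn g (closure Cᶜ)) :
    ∃ G : E → ℂ, Continuous G ∧ EqOn G g Cᶜ ∧ ∀ z ∈ C, G z ≠ 0 := by
  classical
  obtain ⟨l, hl, hlg⟩ := hlog
  obtain ⟨L, hL⟩ := ContinuousMap.exists_restrict_eq (isClosed_frontier (s := C))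
    (⟨(frontier C).domRestrict l, hl.domRestrict⟩ : C(frontier C, ℂ))
  have hLl : EqOn L l (frontier C) := fun z hz => DFunLike.congr_fun hL ⟨z, hz⟩
  refine ⟨C.piecewise (fun z => Complex.exp (L z)) g, continuous_piecewise (fun z hz => ?_)
    L.continuous.cexp.continuousOn hg, piecewise_eqOn_compl .., fun z hz => ?_⟩
  · rw [hLl hz, hlg z hz]
  · simp [hz]

/-- Otherwise `z - p` outside `C` would extend to a nonvanishing function on the plane, which has
a logarithm; but `z - p` has none on large circles. -/
theorem not_hasLogOn_sub_frontier {C : Set ℂ} (hC : Bornology.IsBounded C) {p : ℂ} (hp : p ∈ C) :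
    ¬ HasLogOn (fun z => z - p) (frontier C) := by
  intro hlog
  obtain ⟨G, hG, hGp, hG0⟩ := hlog.exists_continuous_extension (by fun_prop)
  have hG0' : ∀ z, G z ≠ 0 := fun z => by
    by_cases hz : z ∈ C
    · exact hG0 z hz
    · rw [hGp hz, sub_ne_zero]
      exact (ne_of_mem_of_not_mem hp hz).symm
  obtain ⟨r, hr, hCr⟩ := hC.subset_ball_lt 0 p
  refine not_hasLogOn_sub_sphere p hr (((HasLogOn.of_convex_isOpen convex_univ isOpen_univ
    hG.continuousOn fun z _ => hG0' z).mono (subset_univ _)).congr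
      fun z hz => (hGp fun hzC => ?_).symm)
  exact (Metric.mem_ball.1 (hCr hzC)).ne hz

/-! ### Fixed points -/

/-- Choosing for each `z` the logarithm of `(z - p) / (z - x)` that vanishes at `x = p` makes it
depend continuously on `z`. -/
theorem hasLogOn_div_sub_prod {X : Set ℂ} (hX : IsClosed X) (hconn : IsPreconnected X) {p : ℂ}
    (hp : p ∈ X) (hlog : ∀ z ∈ Xᶜ, HasLogOn (fun x => z - x) X) :
    HasLogOn (fun q : ℂ × ℂ => (q.1 - p) / (q.1 - q.2)) (Xᶜ ×ˢ X) := by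
  choose! l hl hlz using hlog
  have hne : ∀ {z x : ℂ}, z ∈ Xᶜ → x ∈ X → z - x ≠ 0 := fun hz hx =>
    sub_ne_zero.2 (ne_of_mem_of_not_mem hx hz).symm
  refine ⟨fun q => l q.1 p - l q.1 q.2, ?_, fun q hq => by
    rw [Complex.exp_sub, hlz _ hq.1 _ hp, hlz _ hq.1 _ hq.2]⟩
  rintro ⟨z₀, x₀⟩ ⟨hz₀, hx₀⟩
  obtain ⟨r, hr, hball⟩ := Metric.isOpen_iff.1 hX.isOpen_compl z₀ hz₀
  have hslit : ∀ {z x : ℂ}, z ∈ Metric.ball z₀ r → x ∈ X →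
      (z - x) / (z₀ - x) ∈ Complex.slitPlane := fun hz hx =>
    sub_div_sub_mem_slitPlane <| (Metric.mem_ball.1 hz).trans_le <|
      not_lt.1 fun hlt => hball (Metric.mem_ball'.2 hlt) hx
  have hconst : ∀ z ∈ Metric.ball z₀ r, ∀ x ∈ X, l z p - l z x = l z₀ p - l z₀ x +
      Complex.log ((z - p) / (z₀ - p)) - Complex.log ((z - x) / (z₀ - x)) := fun z hz x hx => by
    have key := eq_of_exp_comp_const (c := 1) (m := fun x =>
      l z x - l z₀ x - Complex.log ((z - x) / (z₀ - x))) hconn ?_ ?_ hp hx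
    · linear_combination key
    · refine ((hl z (hball hz)).sub (hl z₀ hz₀)).sub (ContinuousOn.clog ?_ fun x => hslit hz)
      exact (by fun_prop : ContinuousOn (fun x => z - x) X).div (by fun_prop) fun x => hne hz₀
    · intro x hx
      rw [Complex.exp_sub, Complex.exp_sub, hlz z (hball hz) x hx, hlz z₀ hz₀ x hx,
        Complex.exp_log (Complex.slitPlane_ne_zero (hslit hz hx)),
        div_self (div_ne_zero (hne (hball hz) hx) (hne hz₀ hx))]
  have hlogc : ∀ {φ : ℂ × ℂ → ℂ}, Continuous φ → MapsTo φ (Metric.ball z₀ r ×ˢ X) X →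
      ContinuousOn (fun q : ℂ × ℂ => Complex.log ((q.1 - φ q) / (z₀ - φ q)))
        (Metric.ball z₀ r ×ˢ X) := fun {φ} hφ hmaps =>
    ((by fun_prop : Continuous fun q : ℂ × ℂ => q.1 - φ q).continuousOn.div (by fun_prop)
      fun q hq => hne hz₀ (hmaps hq)).clog fun q hq => hslit hq.1 (hmaps hq)
  have hcont : ContinuousOn (fun q : ℂ × ℂ => l q.1 p - l q.1 q.2) (Metric.ball z₀ r ×ˢ X) :=
    ((((continuousOn_const.sub ((hl z₀ hz₀).comp continuousOn_snd fun q hq => hq.2)).add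
      (hlogc continuous_const fun _ _ => hp)).sub
        (hlogc continuous_snd fun q hq => hq.2))).congr fun q hq => hconst q.1 hq.1 q.2 hq.2
  refine (hcont _ ⟨Metric.mem_ball_self hr, hx₀⟩).mono_of_mem_nhdsWithin ?_
  exact mem_nhdsWithin.2 ⟨_, Metric.isOpen_ball.prod isOpen_univ,
    ⟨Metric.mem_ball_self hr, mem_univ _⟩, fun q hq => ⟨hq.1.1, hq.2.2⟩⟩

theorem exists_isPreconnected_of_dist_lt {Y : Type*} [PseudoMetricSpace Y] [CompactSpace Y]
    [LocallyConnectedSpace Y] {ε : ℝ} (hε : 0 < ε) :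
    ∃ δ > 0, ∀ x y : Y, dist x y < δ →
      ∃ A, IsPreconnected A ∧ x ∈ A ∧ y ∈ A ∧ A ⊆ Metric.ball x ε := by
  choose U hU hUo hxU hUc using fun x : Y =>
    locallyConnectedSpace_iff_subsets_isOpen_isConnected.1 ‹_› x _
      (Metric.ball_mem_nhds x (half_pos hε))
  obtain ⟨δ, hδ, hL⟩ := lebesgue_number_lemma_of_metric isCompact_univ hUo
    fun x _ => mem_iUnion.2 ⟨x, hxU x⟩
  refine ⟨δ, hδ, fun x y hxy => ?_⟩
  obtain ⟨i, hi⟩ := hL x (mem_univ x)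
  have hx : x ∈ U i := hi (Metric.mem_ball_self hδ)
  refine ⟨U i, (hUc i).isPreconnected, hx, hi (Metric.mem_ball'.2 hxy), fun a ha => ?_⟩
  have hai := Metric.mem_ball.1 (hU i ha)
  have hxi := Metric.mem_ball.1 (hU i hx)
  exact Metric.mem_ball.2 (by linarith [dist_triangle_right a x i])

/-- Write `z - p` as the product of `(z - p) / (z - f x)`, `(z - f x) / (x - f x)` and
`x - f x`. -/
theorem hasLogOn_sub_prod_of_le_dist {X : Set ℂ} {p : ℂ} {f : ℂ → ℂ} {c : ℝ}
    (hdiv : HasLogOn (fun q : ℂ × ℂ => (q.1 - p) / (q.1 - q.2)) (Xᶜ ×ˢ X))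
    (hf : ContinuousOn f X) (hmaps : MapsTo f X X) (hlog : HasLogOn (fun x => x - f x) X)
    (hc : ∀ x ∈ X, c ≤ dist x (f x)) :
    HasLogOn (fun q : ℂ × ℂ => q.1 - p) {q | q.1 ∈ Xᶜ ∧ q.2 ∈ X ∧ dist q.1 q.2 < c} := by
  set T : Set (ℂ × ℂ) := {q | q.1 ∈ Xᶜ ∧ q.2 ∈ X ∧ dist q.1 q.2 < c}
  have hsnd : MapsTo Prod.snd T X := fun q hq => hq.2.1
  have hfT : ContinuousOn (fun q : ℂ × ℂ => f q.2) T := hf.comp continuousOn_snd hsnd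
  have hne : ∀ q ∈ T, q.1 - f q.2 ≠ 0 := fun q hq =>
    sub_ne_zero.2 (ne_of_mem_of_not_mem (hmaps hq.2.1) hq.1).symm
  have hxf : ∀ q ∈ T, q.2 - f q.2 ≠ 0 := fun q hq => hlog.ne_zero hq.2.1
  have hfirst : HasLogOn (fun q : ℂ × ℂ => (q.1 - p) / (q.1 - f q.2)) T :=
    hdiv.comp (φ := fun q : ℂ × ℂ => (q.1, f q.2)) (continuousOn_fst.prodMk hfT)
      fun q hq => ⟨hq.1, hmaps hq.2.1⟩
  have hsecond : HasLogOn (fun q : ℂ × ℂ => (q.1 - f q.2) / (q.2 - f q.2)) T :=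
    HasLogOn.of_mem_slitPlane
      ((continuousOn_fst.sub hfT).div (continuousOn_snd.sub hfT) hxf)
      fun q hq => sub_div_sub_mem_slitPlane (hq.2.2.trans_le (hc q.2 hq.2.1))
  have hthird : HasLogOn (fun q : ℂ × ℂ => q.2 - f q.2) T := hlog.comp continuousOn_snd hsnd
  refine ((hfirst.mul hsecond).mul hthird).congr fun q hq => ?_
  field [hne q hq, hxf q hq]

theorem exists_hasLogOn_sub_thickening {X : Set ℂ} [CompactSpace X] [LocallyConnectedSpace X]
    {p : ℂ} {c : ℝ} (hc : 0 < c)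
    (hlog : HasLogOn (fun q : ℂ × ℂ => q.1 - p) {q | q.1 ∈ Xᶜ ∧ q.2 ∈ X ∧ dist q.1 q.2 < c}) :
    ∃ d > 0, HasLogOn (fun z => z - p) (Xᶜ ∩ Metric.thickening d X) := by
  obtain ⟨δ, hδ, hconn⟩ := exists_isPreconnected_of_dist_lt (Y := X) (half_pos hc)
  refine ⟨min (δ / 2) (c / 2), by positivity, hlog.of_prod
    (V := {q | q.1 ∈ Xᶜ ∧ q.2 ∈ X ∧ dist q.1 q.2 < min (δ / 2) (c / 2)}) ?_ ?_⟩
  · rintro z ⟨-, hz⟩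
    obtain ⟨x, hx, hzx⟩ := Metric.mem_thickening_iff.1 hz
    have hnear : ∀ᶠ z' in 𝓝 z, dist z' x < min (δ / 2) (c / 2) :=
      (by fun_prop : ContinuousAt (dist · x) z).eventually_lt_const hzx
    refine ⟨x, ?_⟩
    filter_upwards [nhdsWithin_le_nhds hnear, self_mem_nhdsWithin] with z' hz' hzW
    exact ⟨hzW.1, hx, hz'⟩
  · rintro z x y ⟨hz, hx, hzx⟩ ⟨-, hy, hzy⟩
    obtain ⟨hzxδ, hzxc⟩ := lt_min_iff.1 hzx
    have hxy : dist x y < δ := by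
      linarith [dist_triangle_left x y z, (lt_min_iff.1 hzy).1]
    obtain ⟨A, hA, hxA, hyA, hAx⟩ := hconn ⟨x, hx⟩ ⟨y, hy⟩ hxy
    refine ⟨(↑) '' A, hA.image _ continuous_subtype_val.continuousOn,
      ⟨_, hxA, rfl⟩, ⟨_, hyA, rfl⟩, ?_⟩
    rintro _ ⟨a, ha, rfl⟩
    have hax : dist (a : ℂ) x < c / 2 := Metric.mem_ball.1 (hAx ha)
    exact ⟨hz, a.2, by linarith [dist_triangle_right z a x]⟩

theorem exists_fixedPoint_of_forall_hasLogOn {X : Set ℂ} (hX : IsCompact X) (hconn : IsConnected X)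
    [LocallyConnectedSpace X]
    (hlog : ∀ g : ℂ → ℂ, ContinuousOn g X → (∀ x ∈ X, g x ≠ 0) → HasLogOn g X)
    {f : ℂ → ℂ} (hf : ContinuousOn f X) (hmaps : MapsTo f X X) : ∃ x ∈ X, f x = x := by
  by_contra! hfix
  have : CompactSpace X := isCompact_iff_compactSpace.1 hX
  obtain ⟨p, hp⟩ := hconn.nonempty
  obtain ⟨x₀, hx₀, hmin⟩ := hX.exists_isMinOn ⟨p, hp⟩
    (by fun_prop : ContinuousOn (fun x => dist x (f x)) X)
  have hdiv := hasLogOn_div_sub_prod hX.isClosed hconn.isPreconnected hp fun z hz =>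
    hlog _ (by fun_prop) fun x hx => sub_ne_zero.2 (ne_of_mem_of_not_mem hx hz).symm
  obtain ⟨d, hd, hlogd⟩ := exists_hasLogOn_sub_thickening (dist_pos.2 (hfix x₀ hx₀).symm)
    (hasLogOn_sub_prod_of_le_dist hdiv hf hmaps
      (hlog _ (continuousOn_id.sub hf) fun x hx => sub_ne_zero.2 (hfix x hx).symm)
      fun x hx => hmin hx)
  have hfrontier : frontier (Metric.cthickening (d / 2) X) ⊆ Xᶜ ∩ Metric.thickening d X := by
    refine fun z hz => ⟨fun hzX => hz.2 ?_,
      Metric.cthickening_subset_thickening' hd (half_lt_self hd) X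
        (Metric.isClosed_cthickening.frontier_subset hz)⟩
    exact Metric.thickening_subset_interior_cthickening _ _
      (Metric.self_subset_thickening (half_pos hd) X hzX)
  exact not_hasLogOn_sub_frontier hX.isBounded.cthickening
    (Metric.self_subset_cthickening X hp) (hlogd.mono hfrontier)

/-! ### Local indices and Eilenberg's theorem -/

/-- `G` has index `n` at `a`: near `a`, but not necessarily at `a` itself, `G z / (z - a) ^ n` has
a continuous logarithm. The point `a` is typically an isolated zero of `G`. -/
def HasIndexAt (G : ℂ → ℂ) (n : ℤ) (a : ℂ) : Prop :=
  ∃ S ∈ 𝓝[≠] a, HasLogOn (fun z => G z / (z - a) ^ n) S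

theorem HasIndexAt.eventually_ne {G : ℂ → ℂ} {n : ℤ} {a : ℂ} (h : HasIndexAt G n a) :
    ∀ᶠ z in 𝓝[≠] a, G z ≠ 0 := by
  obtain ⟨S, hS, hlog⟩ := h
  filter_upwards [hS] with z hz hGz
  exact hlog.ne_zero hz (by simp only [hGz, zero_div])

theorem HasIndexAt.of_mul_eq {G Q h : ℂ → ℂ} {n : ℤ} {a : ℂ} {U : Set ℂ} (hG : HasIndexAt G n a)
    (hU : U ∈ 𝓝 a) (hh : HasLogOn h U) (heq : ∀ᶠ z in 𝓝 a, G z = Q z * h z) :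
    HasIndexAt Q n a := by
  obtain ⟨S, hS, hlog⟩ := hG
  refine ⟨S ∩ (U ∩ {z | G z = Q z * h z}),
    inter_mem hS (mem_nhdsWithin_of_mem_nhds (inter_mem hU heq)),
    ((hlog.mono inter_subset_left).div (hh.mono fun z hz => hz.2.1)).congr fun z hz => ?_⟩
  have hhz := hh.ne_zero hz.2.1
  simp only [show G z = Q z * h z from hz.2.2, div_right_comm _ (_ ^ n) (h z),
    mul_div_cancel_right₀ _ hhz]

section RealLinear

variable (A : ℂ →ₗ[ℝ] ℂ)

theorem apply_eq_mul_add_mul_conj (v : ℂ) :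
    A v = (A 1 - Complex.I * A Complex.I) / 2 * v +
      (A 1 + Complex.I * A Complex.I) / 2 * starRingEnd ℂ v := by
  have hv : A v = v.re * A 1 + v.im * A Complex.I := by
    conv_lhs => rw [show v = v.re • (1 : ℂ) + v.im • Complex.I by simp [Complex.re_add_im],
      map_add, map_smul, map_smul, Complex.real_smul, Complex.real_smul]
  rw [hv, Complex.re_eq_add_conj, Complex.im_eq_sub_conj]
  field_simp
  ring_nf
  rw [Complex.I_sq]
  ring

theorem det_eq_norm_sq_sub_norm_sq :
    LinearMap.det A = ‖(A 1 - Complex.I * A Complex.I) / 2‖ ^ 2 -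
      ‖(A 1 + Complex.I * A Complex.I) / 2‖ ^ 2 := by
  rw [← LinearMap.det_toMatrix Complex.basisOneI, Matrix.det_fin_two]
  simp only [LinearMap.toMatrix_apply, ← Complex.normSq_eq_norm_sq, Complex.normSq_apply]
  simp only [Complex.coe_basisOneI, Matrix.cons_val_zero, Complex.coe_basisOneI_repr,
    Matrix.cons_val_one, Matrix.cons_val_fin_one, Complex.div_ofNat_re, Complex.sub_re,
    Complex.mul_re, Complex.I_re, zero_mul, Complex.I_im, one_mul, zero_sub, sub_neg_eq_add,
    Complex.div_ofNat_im, Complex.sub_im, Complex.mul_im, zero_add, Complex.add_re, Complex.add_im]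
  ring

theorem exists_hasLogOn_linearMap_div_zpow (hA : LinearMap.det A ≠ 0) :
    ∃ n : ℤ, HasLogOn (fun v => A v / v ^ n) {0}ᶜ := by
  rw [det_eq_norm_sq_sub_norm_sq] at hA
  have hAv := apply_eq_mul_add_mul_conj A
  set α := (A 1 - Complex.I * A Complex.I) / 2
  set β := (A 1 + Complex.I * A Complex.I) / 2
  have hquot : ∀ n : ℤ, ContinuousOn (fun v => A v / v ^ n) {0}ᶜ := fun n =>
    A.continuous_of_finiteDimensional.continuousOn.div
      (continuousOn_id.zpow₀ _ fun v hv => .inl hv) fun v hv => zpow_ne_zero _ hv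
  rcases lt_or_gt_of_ne (sub_ne_zero.1 hA) with h | h
  · have hlt : ‖α‖ < ‖β‖ := lt_of_pow_lt_pow_left₀ 2 (norm_nonneg _) h
    have hβ : β ≠ 0 := norm_pos_iff.1 ((norm_nonneg _).trans_lt hlt)
    have hnorm : HasLogOn (fun v : ℂ => β * (‖v‖ ^ 2 : ℝ)) {0}ᶜ :=
      (HasLogOn.const hβ).mul <| .of_mem_slitPlane (by fun_prop) fun v hv =>
        Complex.ofReal_mem_slitPlane.2 (pow_pos (norm_pos_iff.2 hv) 2)
    refine ⟨-1, hnorm.of_norm_sub_lt (hquot _) fun v hv => ?_⟩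
    · have hdiff : A v / v ^ (-1 : ℤ) - β * (‖v‖ ^ 2 : ℝ) = α * v ^ 2 := by
        rw [hAv, zpow_neg_one, div_inv_eq_mul, ← Complex.normSq_eq_norm_sq,
          Complex.normSq_eq_conj_mul_self]
        ring
      rw [hdiff, norm_mul, norm_mul, norm_pow, Complex.norm_real, norm_pow, norm_norm]
      exact mul_lt_mul_of_pos_right hlt (pow_pos (norm_pos_iff.2 hv) 2)
  · have hlt : ‖β‖ < ‖α‖ := lt_of_pow_lt_pow_left₀ 2 (norm_nonneg _) h
    have hα : α ≠ 0 := norm_pos_iff.1 ((norm_nonneg _).trans_lt hlt)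
    refine ⟨1, (HasLogOn.const hα).of_norm_sub_lt (hquot _) fun v hv => ?_⟩
    · rw [hAv, zpow_one, div_sub' (by exact hv), norm_div, div_lt_iff₀ (norm_pos_iff.2 hv),
        mul_comm v, add_sub_cancel_left, norm_mul, Complex.norm_conj]
      exact mul_lt_mul_of_pos_right hlt (norm_pos_iff.2 hv)

end RealLinear

theorem exists_hasIndexAt_of_hasFDerivAt {G : ℂ → ℂ} {a : ℂ} {A : ℂ →L[ℝ] ℂ} (hG : Continuous G)
    (hA : HasFDerivAt G A a) (hGa : G a = 0) (hdet : A.det ≠ 0) : ∃ n, HasIndexAt G n a := by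
  obtain ⟨n, hn⟩ := exists_hasLogOn_linearMap_div_zpow (A : ℂ →ₗ[ℝ] ℂ) hdet
  have hsmall : (fun z => G z - A (z - a)) =o[𝓝 a] fun z => A (z - a) := by
    have hlittle := hasFDerivAt_iff_isLittleO.1 hA
    simp only [hGa, sub_zero] at hlittle
    exact hlittle.trans_isBigO ((A.toContinuousLinearEquivOfDetNeZero hdet).isBigO_sub_rev _ _)
  have hlogA : HasLogOn (fun z => A (z - a) / (z - a) ^ n) {a}ᶜ :=
    hn.comp (by fun_prop) fun z hz => sub_ne_zero.2 hz
  refine ⟨n, {z | z ≠ a ∧ ‖G z - A (z - a)‖ ≤ 1 / 2 * ‖A (z - a)‖}, ?_,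
    (hlogA.mono fun z hz => hz.1).of_norm_sub_lt ?_ fun z hz => ?_⟩
  · filter_upwards [self_mem_nhdsWithin,
      nhdsWithin_le_nhds (hsmall.def (by norm_num : (0 : ℝ) < 1 / 2))]
      with z hza hz using ⟨hza, hz⟩
  · exact hG.continuousOn.div ((by fun_prop : ContinuousOn (fun z => z - a) _).zpow₀ _
      fun z hz => .inl (sub_ne_zero.2 hz.1)) fun z hz => zpow_ne_zero _ (sub_ne_zero.2 hz.1)
  · have hpos : 0 < ‖A (z - a) / (z - a) ^ n‖ := norm_pos_iff.2 (hlogA.ne_zero hz.1)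
    rw [norm_div] at hpos
    have hpow : 0 < ‖(z - a) ^ n‖ := norm_pos_iff.2 (zpow_ne_zero _ (sub_ne_zero.2 hz.1))
    rw [← sub_div, norm_div, norm_div]
    gcongr
    linarith [(div_pos_iff_of_pos_right hpow).1 hpos, hz.2]

theorem hasLogOn_sub_ball {a p : ℂ} (hap : a ≠ p) :
    HasLogOn (fun z => z - p) (Metric.ball a (dist a p)) :=
  (HasLogOn.const (sub_ne_zero.2 hap)).of_norm_sub_lt (by fun_prop) fun z hz => by
    simpa [← dist_eq_norm] using hz

theorem HasIndexAt.exists_continuous_div {G : ℂ → ℂ} {n : ℤ} {a : ℂ} (h : HasIndexAt G n a)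
    (hG : Continuous G) {U : Set ℂ} (hU : U ∈ 𝓝 a) :
    ∃ Q : ℂ → ℂ, ∃ B ⊆ U, Continuous Q ∧ IsClosed B ∧ a ∈ B ∧
      (∀ z ∈ Bᶜ, G z = Q z * (z - a) ^ n) ∧ ∀ z ∈ B, Q z ≠ 0 := by
  obtain ⟨S, hS, hlog⟩ := h
  obtain ⟨B, ⟨hBa, hB⟩, hBsub⟩ :=
    (closed_nhds_basis a).mem_iff.1 (inter_mem hU (insert_mem_nhds_iff.2 hS))
  have hint : a ∈ interior B := mem_interior_iff_mem_nhds.2 hBa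
  have hne : ∀ {z}, z ∉ interior B → z - a ≠ 0 := fun hz =>
    sub_ne_zero.2 (ne_of_mem_of_not_mem hint hz).symm
  have hfrontier : frontier B ⊆ S := fun z hz =>
    (hBsub (hB.frontier_subset hz)).2.resolve_left (sub_ne_zero.1 (hne hz.2))
  have hquot : ContinuousOn (fun z => G z / (z - a) ^ n) (closure Bᶜ) := by
    rw [closure_compl]
    exact hG.continuousOn.div ((by fun_prop : ContinuousOn (fun z => z - a) _).zpow₀ _
      fun z hz => .inl (hne hz)) fun z hz => zpow_ne_zero _ (hne hz)
  obtain ⟨Q, hQ, hQG, hQ0⟩ := (hlog.mono hfrontier).exists_continuous_extension hquot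
  refine ⟨Q, B, fun z hz => (hBsub hz).1, hQ, hB, mem_of_mem_nhds hBa, fun z hz => ?_, hQ0⟩
  rw [hQG hz, div_mul_cancel₀ _ (zpow_ne_zero _ (hne fun hzi => hz (interior_subset hzi)))]

theorem hasLogOn_of_finite_zeros {X K : Set ℂ} (hX : IsClosed X)
    (hlog : ∀ p ∉ X, HasLogOn (fun z => z - p) X) (hXK : X ⊆ K) (hK : Convex ℝ K) (hKo : IsOpen K)
    (Z : Finset ℂ) {G : ℂ → ℂ} (hG : Continuous G) (hZ : ∀ z ∈ K, G z = 0 → z ∈ Z)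
    (hindex : ∀ a ∈ Z, a ∉ X ∧ ∃ n, HasIndexAt G n a) : HasLogOn G X := by
  induction Z using Finset.induction_on generalizing G with
  | empty =>
    exact (HasLogOn.of_convex_isOpen hK hKo hG.continuousOn
      fun z hz hGz => Finset.notMem_empty z (hZ z hz hGz)).mono hXK
  | insert a Z ha ih =>
    obtain ⟨haX, n, hn⟩ := hindex a (Finset.mem_insert_self a Z)
    have hfar : (X ∪ Z)ᶜ ∈ 𝓝 a :=
      (hX.union Z.finite_toSet.isClosed).isOpen_compl.mem_nhds fun h => h.elim haX ha
    obtain ⟨Q, B, hBfar, hQ, hB, haB, hGQ, hQ0⟩ := hn.exists_continuous_div hG hfar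
    have hQX : HasLogOn Q X := ih hQ (fun z hz hQz => ?_) fun b hb => ?_
    · refine (hQX.mul ((hlog a haX).zpow n)).congr fun z hz => hGQ z fun hzB => ?_
      exact hBfar hzB (.inl hz)
    · have hzB : z ∉ B := fun hzB => hQ0 z hzB hQz
      refine (Finset.mem_insert.1 (hZ z hz (by rw [hGQ z hzB, hQz, zero_mul]))).resolve_left ?_
      rintro rfl
      exact hzB haB
    · obtain ⟨hbX, m, hm⟩ := hindex b (Finset.mem_insert_of_mem hb)
      have hba : b ≠ a := ne_of_mem_of_not_mem hb ha
      have hbB : Bᶜ ∈ 𝓝 b := hB.isOpen_compl.mem_nhds fun hbB => hBfar hbB (.inr hb)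
      exact ⟨hbX, m, hm.of_mul_eq (Metric.ball_mem_nhds b (dist_pos.2 hba))
        ((hasLogOn_sub_ball hba).zpow n) (by filter_upwards [hbB] with z hz using hGQ z hz)⟩

theorem finite_zeros_of_hasIndexAt {G : ℂ → ℂ} (hG : Continuous G)
    (hindex : ∀ a, G a = 0 → ∃ n, HasIndexAt G n a) {K : Set ℂ} (hK : IsCompact K) :
    {z ∈ K | G z = 0}.Finite := by
  by_contra hinf
  obtain ⟨a, -, hacc⟩ :=
    Set.Infinite.exists_accPt_of_subset_isCompact hinf hK fun z hz => hz.1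
  have hfreq : ∃ᶠ z in 𝓝[≠] a, G z = 0 :=
    (accPt_iff_frequently_nhdsNE.1 hacc).mono fun z hz => hz.2
  have hclosed : IsClosed {z | G z = 0} := isClosed_eq hG continuous_const
  have hGa : G a = 0 := hclosed.mem_of_frequently_of_tendsto hfreq
    (tendsto_id'.2 nhdsWithin_le_nhds)
  obtain ⟨n, hn⟩ := hindex a hGa
  exact hfreq hn.eventually_ne

/-- Perturb `g` to a `C¹` map and then, by Sard's theorem, subtract a small regular value. -/
theorem exists_norm_sub_lt_hasIndexAt {g : ℂ → ℂ} (hg : Continuous g) {ε : ℝ} (hε : 0 < ε) :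
    ∃ G : ℂ → ℂ, Continuous G ∧ (∀ z, ‖G z - g z‖ < ε) ∧
      ∀ a, G a = 0 → ∃ n, HasIndexAt G n a := by
  obtain ⟨P, hP, hPg, -⟩ := hg.exists_contDiff_approx 1 (ε := fun _ => ε / 2) continuous_const
    fun _ => half_pos hε
  have hdiff : ∀ z, HasFDerivAt P (fderiv ℝ P z) z := fun z =>
    (hP.differentiable one_ne_zero z).hasFDerivAt
  have hsard : MeasureTheory.volume (P '' {z | (fderiv ℝ P z).det = 0}) = 0 :=
    MeasureTheory.addHaar_image_eq_zero_of_det_fderivWithin_eq_zero MeasureTheory.volume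
      (fun z _ => (hdiff z).hasFDerivWithinAt) fun z hz => hz
  obtain ⟨c, hc, hcreg⟩ : ∃ c ∈ Metric.ball (0 : ℂ) (ε / 2),
      c ∉ P '' {z | (fderiv ℝ P z).det = 0} := by
    by_contra! hsub
    exact (Metric.measure_ball_pos MeasureTheory.volume (0 : ℂ) (half_pos hε)).ne'
      (MeasureTheory.measure_mono_null hsub hsard)
  have hGc : Continuous fun z => P z - c := hP.continuous.sub continuous_const
  refine ⟨fun z => P z - c, hGc, fun z => ?_, fun a ha =>
    exists_hasIndexAt_of_hasFDerivAt hGc ((hdiff a).sub_const c) ha fun hdet =>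
      hcreg ⟨a, hdet, sub_eq_zero.1 ha⟩⟩
  have hPgz : ‖P z - g z‖ < ε / 2 := by simpa [dist_eq_norm, norm_sub_rev] using hPg z
  rw [sub_right_comm]
  linarith [norm_sub_le (P z - g z) c, mem_ball_zero_iff.1 hc]

theorem hasLogOn_of_forall_hasLogOn_sub {X : Set ℂ} (hX : IsCompact X)
    (hlog : ∀ p ∉ X, HasLogOn (fun z => z - p) X) {g : ℂ → ℂ} (hg : ContinuousOn g X)
    (hg0 : ∀ x ∈ X, g x ≠ 0) : HasLogOn g X := by
  rcases X.eq_empty_or_nonempty with rfl | hne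
  · exact ⟨0, continuousOn_empty _, fun _ hz => hz.elim⟩
  obtain ⟨x₀, hx₀, hmin⟩ := hX.exists_isMinOn hne hg.norm
  obtain ⟨g', hg'⟩ := ContinuousMap.exists_restrict_eq hX.isClosed
    (⟨X.domRestrict g, hg.domRestrict⟩ : C(X, ℂ))
  have hgg' : EqOn g' g X := fun z hz => DFunLike.congr_fun hg' ⟨z, hz⟩
  obtain ⟨G, hG, hGg, hindex⟩ := exists_norm_sub_lt_hasIndexAt g'.continuous
    (half_pos (norm_pos_iff.2 (hg0 x₀ hx₀)))
  have hclose : ∀ x ∈ X, ‖G x - g x‖ < ‖g x‖ / 2 := fun x hx => by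
    rw [← hgg' hx]
    exact (hGg x).trans_le (by rw [hgg' hx]; exact div_le_div_of_nonneg_right (hmin hx) two_pos.le)
  have hhalf : ∀ x ∈ X, ‖g x‖ / 2 < ‖G x‖ := fun x hx => by
    linarith [hclose x hx, norm_sub_norm_le (g x) (G x), norm_sub_rev (g x) (G x)]
  obtain ⟨R, hR⟩ := hX.isBounded.subset_ball 0
  have hfin := finite_zeros_of_hasIndexAt hG hindex (isCompact_closedBall 0 R)
  have hlogG : HasLogOn G X := hasLogOn_of_finite_zeros hX.isClosed hlog hR
    (convex_ball 0 R) Metric.isOpen_ball hfin.toFinset hG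
    (fun z hz hGz => hfin.mem_toFinset.2 ⟨Metric.ball_subset_closedBall hz, hGz⟩) fun a ha => by
      have hGa : G a = 0 := (hfin.mem_toFinset.1 ha).2
      refine ⟨fun haX => ?_, hindex a hGa⟩
      linarith [hhalf a haX, norm_nonneg (g a), norm_eq_zero.2 hGa]
  exact hlogG.of_norm_sub_lt hg fun x hx => by
    rw [norm_sub_rev]
    exact (hclose x hx).trans (hhalf x hx)

/-! ### Local path connectedness of Peano continua -/

/-- `IsTube ε a b x y G`: the relation `G ⊆ ℝ × Y` over `[a, b]` is a finite chain of rectangles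
`I × closure V`, where consecutive intervals `I` subdivide `[a, b]`, the `V` are connected open sets
of diameter at most `ε`, consecutive ones meet, and `x`, `y` lie in the first and the last one.
Nested tubes with `ε → 0` shrink to the graph of a path from `x` to `y`. -/
inductive IsTube {Y : Type*} [MetricSpace Y] (ε : ℝ) : ℝ → ℝ → Y → Y → Set (ℝ × Y) → Prop
  | prod {a b : ℝ} {x y : Y} {V : Set Y} (hab : a < b) (hV : IsOpen V) (hconn : IsPreconnected V)
      (hx : x ∈ V) (hy : y ∈ V) (hdist : ∀ u ∈ closure V, ∀ v ∈ closure V, dist u v ≤ ε) :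
      IsTube ε a b x y (Icc a b ×ˢ closure V)
  | union {a b c : ℝ} {x y z : Y} {A B : Set (ℝ × Y)} (hA : IsTube ε a b x y A)
      (hB : IsTube ε b c y z B) : IsTube ε a c x z (A ∪ B)

namespace IsTube

variable {Y : Type*} [MetricSpace Y] {ε a b : ℝ} {x y : Y} {G : Set (ℝ × Y)}

theorem lt (h : IsTube ε a b x y G) : a < b := by
  induction h with
  | prod hab => exact hab
  | union _ _ ihA ihB => exact ihA.trans ihB

theorem isClosed (h : IsTube ε a b x y G) : IsClosed G := by
  induction h with
  | prod => exact isClosed_Icc.prod isClosed_closure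
  | union _ _ ihA ihB => exact ihA.union ihB

theorem fst_mem (h : IsTube ε a b x y G) {q : ℝ × Y} (hq : q ∈ G) : q.1 ∈ Icc a b := by
  induction h with
  | prod => exact hq.1
  | union hA hB ihA ihB =>
    rcases hq with hq | hq
    · exact Icc_subset_Icc_right hB.lt.le (ihA hq)
    · exact Icc_subset_Icc_left hA.lt.le (ihB hq)

theorem exists_mem (h : IsTube ε a b x y G) {t : ℝ} (ht : t ∈ Icc a b) : ∃ u, (t, u) ∈ G := by
  induction h with
  | prod _ _ _ hx => exact ⟨_, ht, subset_closure hx⟩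
  | @union a b c _ _ _ _ _ _ _ ihA ihB =>
    rcases le_total t b with htb | hbt
    · exact (ihA ⟨ht.1, htb⟩).imp fun _ => Or.inl
    · exact (ihB ⟨hbt, ht.2⟩).imp fun _ => Or.inr

theorem left_mem (h : IsTube ε a b x y G) : (a, x) ∈ G := by
  induction h with
  | prod hab _ _ hx => exact ⟨left_mem_Icc.2 hab.le, subset_closure hx⟩
  | union _ _ ihA => exact Or.inl ihA

theorem right_mem (h : IsTube ε a b x y G) : (b, y) ∈ G := by
  induction h with
  | prod hab _ _ _ hy => exact ⟨right_mem_Icc.2 hab.le, subset_closure hy⟩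
  | union _ _ _ ihB => exact Or.inr ihB

theorem dist_left_le (h : IsTube ε a b x y G) {u : Y} (hu : (a, u) ∈ G) : dist u x ≤ ε := by
  induction h with
  | prod _ _ _ hx _ hdist => exact hdist _ hu.2 _ (subset_closure hx)
  | union hA hB ihA =>
    exact ihA (hu.resolve_right fun hu => hA.lt.not_ge (hB.fst_mem hu).1)

theorem dist_right_le (h : IsTube ε a b x y G) {u : Y} (hu : (b, u) ∈ G) : dist u y ≤ ε := by
  induction h with
  | prod _ _ _ _ hy hdist => exact hdist _ hu.2 _ (subset_closure hy)
  | union hA hB _ ihB =>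
    exact ihB (hu.resolve_left fun hu => hB.lt.not_ge (hA.fst_mem hu).2)

theorem dist_le (h : IsTube ε a b x y G) {t : ℝ} {u v : Y} (hu : (t, u) ∈ G) (hv : (t, v) ∈ G) :
    dist u v ≤ 2 * ε := by
  induction h generalizing u v with
  | prod _ _ _ _ _ hdist =>
    linarith [hdist u hu.2 v hv.2, dist_nonneg (x := u) (y := v)]
  | @union a b c x y z A B hA hB ihA ihB =>
    have hglue {u v : Y} (hu : (t, u) ∈ A) (hv : (t, v) ∈ B) : dist u v ≤ 2 * ε := by
      obtain rfl : t = b := le_antisymm (hA.fst_mem hu).2 (hB.fst_mem hv).1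
      linarith [dist_triangle_right u v y, hA.dist_right_le hu, hB.dist_left_le hv]
    rcases hu with hu | hu <;> rcases hv with hv | hv
    · exact ihA hu hv
    · exact hglue hu hv
    · exact dist_comm u v ▸ hglue hv hu
    · exact ihB hu hv

variable [LocallyConnectedSpace Y]

theorem exists_subset_prod_closure {V : Set Y} (hV : IsOpen V) (hconn : IsPreconnected V)
    (hx : x ∈ V) (hy : y ∈ V) (hε : 0 < ε) :
    ∀ a b : ℝ, a < b → ∃ G ⊆ Icc a b ×ˢ closure V, IsTube ε a b x y G := by
  refine hconn.induction₂' (fun x y => ∀ a b : ℝ, a < b → ∃ G ⊆ Icc a b ×ˢ closure V,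
    IsTube ε a b x y G) (fun z hz => ?_) (fun x y z _ _ _ hxy hyz a b hab => ?_) hx hy
  · obtain ⟨W, hWsub, hWo, hzW, hWconn⟩ :=
      locallyConnectedSpace_iff_subsets_isOpen_isConnected.1 ‹_› z (V ∩ Metric.ball z (ε / 2))
        (inter_mem (hV.mem_nhds hz) (Metric.ball_mem_nhds z (half_pos hε)))
    have hball : closure W ⊆ Metric.closedBall z (ε / 2) :=
      (closure_mono (hWsub.trans inter_subset_right)).trans Metric.closure_ball_subset_closedBall
    have hdist : ∀ u ∈ closure W, ∀ v ∈ closure W, dist u v ≤ ε := fun u hu v hv => by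
      linarith [dist_triangle_right u v z, Metric.mem_closedBall.1 (hball hu),
        Metric.mem_closedBall.1 (hball hv)]
    have hsub (a b : ℝ) : Icc a b ×ˢ closure W ⊆ Icc a b ×ˢ closure V :=
      prod_mono_right (closure_mono (hWsub.trans inter_subset_left))
    filter_upwards [mem_nhdsWithin_of_mem_nhds (hWo.mem_nhds hzW)] with w hw
    exact ⟨fun a b hab => ⟨_, hsub a b, .prod hab hWo hWconn.isPreconnected hzW hw hdist⟩,
      fun a b hab => ⟨_, hsub a b, .prod hab hWo hWconn.isPreconnected hw hzW hdist⟩⟩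
  · have hleft : a < (a + b) / 2 := by linarith
    have hright : (a + b) / 2 < b := by linarith
    obtain ⟨A, hAsub, hA⟩ := hxy a _ hleft
    obtain ⟨B, hBsub, hB⟩ := hyz _ b hright
    exact ⟨A ∪ B, union_subset (hAsub.trans (prod_mono_left (Icc_subset_Icc_right hright.le)))
      (hBsub.trans (prod_mono_left (Icc_subset_Icc_left hleft.le))), hA.union hB⟩

theorem exists_subset (h : IsTube ε a b x y G) {δ : ℝ} (hδ : 0 < δ) :
    ∃ G' ⊆ G, IsTube δ a b x y G' := by
  induction h with
  | prod hab hV hconn hx hy => exact exists_subset_prod_closure hV hconn hx hy hδ _ _ hab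
  | union _ _ ihA ihB =>
    obtain ⟨A', hAsub, hA'⟩ := ihA
    obtain ⟨B', hBsub, hB'⟩ := ihB
    exact ⟨A' ∪ B', union_subset_union hAsub hBsub, hA'.union hB'⟩

theorem exists_antitone_seq {V : Set Y} (hV : IsOpen V) (hconn : IsPreconnected V)
    (hx : x ∈ V) (hy : y ∈ V) :
    ∃ S : ℕ → Set (ℝ × Y), (∀ n, S (n + 1) ⊆ S n) ∧ S 0 ⊆ Icc 0 1 ×ˢ closure V ∧
      ∀ n : ℕ, IsTube (1 / ((n : ℝ) + 1)) 0 1 x y (S n) := by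
  obtain ⟨G₀, hG₀sub, hG₀⟩ :=
    exists_subset_prod_closure hV hconn hx hy (Nat.one_div_pos_of_nat (α := ℝ) (n := 0)) 0 1 one_pos
  have hnext (n : ℕ) (G : {G // IsTube (1 / ((n : ℝ) + 1)) 0 1 x y G}) :
      ∃ G' : {G' // IsTube (1 / (((n + 1 : ℕ) : ℝ) + 1)) 0 1 x y G'}, G'.1 ⊆ G.1 := by
    obtain ⟨G', hsub, hG'⟩ := G.2.exists_subset (Nat.one_div_pos_of_nat (α := ℝ) (n := n + 1))
    exact ⟨⟨G', hG'⟩, hsub⟩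
  choose next hnext using hnext
  let S (n : ℕ) : {G // IsTube (1 / ((n : ℝ) + 1)) 0 1 x y G} := Nat.rec ⟨G₀, hG₀⟩ next n
  exact ⟨fun n => (S n).1, fun n => hnext n (S n), hG₀sub, fun n => (S n).2⟩

end IsTube

theorem continuous_of_isClosed_rel {T S Y : Type*} [TopologicalSpace T] [TopologicalSpace S]
    [CompactSpace S] [TopologicalSpace Y] {R : Set (T × S)} (hR : IsClosed R) {k : S → Y}
    (hk : Continuous k) {h : T → Y} (hex : ∀ t, ∃ s, (t, s) ∈ R)
    (heq : ∀ t s, (t, s) ∈ R → h t = k s) : Continuous h := by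
  refine continuous_iff_isClosed.2 fun C hC => ?_
  have hpre : h ⁻¹' C = Prod.fst '' (R ∩ (k ∘ Prod.snd) ⁻¹' C) := by
    ext t
    constructor
    · intro ht
      obtain ⟨s, hs⟩ := hex t
      exact ⟨(t, s), ⟨hs, show k s ∈ C from heq t s hs ▸ ht⟩, rfl⟩
    · rintro ⟨q, ⟨hq, hqC⟩, rfl⟩
      exact mem_preimage.2 (heq _ _ hq ▸ hqC)
  exact hpre ▸ isClosedMap_fst_of_compactSpace _ (hR.inter (hC.preimage (by fun_prop)))

section Peano

variable {Y : Type*} [MetricSpace Y] [CompactSpace Y] [LocallyConnectedSpace Y]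

theorem joinedIn_closure_of_isPreconnected {V : Set Y} (hconn : IsPreconnected V)
    (hV : IsOpen V) {x y : Y} (hx : x ∈ V) (hy : y ∈ V) : JoinedIn (closure V) x y := by
  obtain ⟨S, hanti, hS₀, hS⟩ := IsTube.exists_antitone_seq hV hconn hx hy
  have hex (t : unitInterval) : ∃ u, ∀ n, ((t : ℝ), u) ∈ S n := by
    have hclosed (n : ℕ) : IsClosed {u | ((t : ℝ), u) ∈ S n} :=
      (hS n).isClosed.preimage (by fun_prop)
    obtain ⟨u, hu⟩ := IsCompact.nonempty_iInter_of_sequence_nonempty_isCompact_isClosed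
      (fun n => {u | ((t : ℝ), u) ∈ S n}) (fun n u hu => hanti n hu)
      (fun n => (hS n).exists_mem t.2) (hclosed 0).isCompact hclosed
    exact ⟨u, fun n => mem_iInter.1 hu n⟩
  have huniq {t : ℝ} {u v : Y} (hu : ∀ n, (t, u) ∈ S n) (hv : ∀ n, (t, v) ∈ S n) : u = v := by
    have hlim : Tendsto (fun n : ℕ => 2 * (1 / ((n : ℝ) + 1))) atTop (𝓝 (2 * 0)) :=
      tendsto_one_div_add_atTop_nhds_zero_nat.const_mul 2
    rw [mul_zero] at hlim
    exact dist_le_zero.1 (ge_of_tendsto' hlim fun n => (hS n).dist_le (hu n) (hv n))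
  choose f hf using hex
  have hclosed : IsClosed {q : unitInterval × Y | ∀ n, ((q.1 : ℝ), q.2) ∈ S n} := by
    simp only [ofPred_forall]
    exact isClosed_iInter fun n => (hS n).isClosed.preimage (by fun_prop)
  have hcont : Continuous f := continuous_of_isClosed_rel hclosed continuous_id
    (fun t => ⟨f t, hf t⟩) fun t u hu => huniq (hf t) hu
  exact ⟨⟨⟨f, hcont⟩, huniq (hf 0) fun n => (hS n).left_mem,
    huniq (hf 1) fun n => (hS n).right_mem⟩, fun t => (hS₀ (hf t 0)).2⟩

theorem locallyPathConnectedSpace_of_compact_metric : LocallyPathConnectedSpace Y := by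
  refine locallyPathConnectedSpace_iff_pathComponentIn_mem_nhds.2 fun x u hu hxu => ?_
  obtain ⟨ε, hε, hball⟩ := Metric.isOpen_iff.1 hu x hxu
  obtain ⟨W, hWsub, hWo, hxW, hWconn⟩ :=
    locallyConnectedSpace_iff_subsets_isOpen_isConnected.1 ‹_› x _
      (Metric.ball_mem_nhds x (half_pos hε))
  have hsub : closure W ⊆ u := (closure_mono hWsub).trans <|
    Metric.closure_ball_subset_closedBall.trans <|
      (Metric.closedBall_subset_ball (half_lt_self hε)).trans hball
  filter_upwards [hWo.mem_nhds hxW] with y hy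
  exact (joinedIn_closure_of_isPreconnected hWconn.isPreconnected hWo hxW hy).mono hsub

end Peano

theorem hasLogOn_of_hasLogOn_univ {E : Type*} [TopologicalSpace E] {g : E → ℂ} {S : Set E}
    (hg : HasLogOn (fun x : S => g x) univ) : HasLogOn g S := by
  obtain ⟨l, hl, hlg⟩ := hg
  have hext (x : S) : Function.extend Subtype.val l 0 x = l x :=
    Subtype.val_injective.extend_apply l 0 x
  refine ⟨Function.extend Subtype.val l 0, ?_, fun x hx => ?_⟩
  · rw [continuousOn_iff_continuous_domRestrict]
    exact (continuousOn_univ.1 hl).congr fun x => (hext x).symm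
  · exact (congrArg Complex.exp (hext ⟨x, hx⟩)).trans (hlg ⟨x, hx⟩ (mem_univ _))

/-- Were there no such points, lifting paths through the exponential would define a logarithm. -/
theorem exists_joinedIn_exp_preimage_range {A : Type*} [TopologicalSpace A] [PathConnectedSpace A]
    [LocallyPathConnectedSpace A] {g : A → ℂ} (hg : Continuous g) (hne : ∀ a, g a ≠ 0)
    (hlog : ¬ HasLogOn g univ) :
    ∃ w w', w ≠ w' ∧ Complex.exp w = Complex.exp w' ∧
      JoinedIn (Complex.exp ⁻¹' range g) w w' := by
  by_contra! hunique
  let f : C(A, {z : ℂ // z ≠ 0}) := ⟨fun a => ⟨g a, hne a⟩, by fun_prop⟩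
  obtain ⟨a₀⟩ : Nonempty A := inferInstance
  have hlift₀ : (⟨_, (Complex.log (g a₀)).exp_ne_zero⟩ : {z : ℂ // z ≠ 0}) = f a₀ :=
    Subtype.ext (Complex.exp_log (hne a₀))
  refine (Complex.isCoveringMap_exp.isLocalHomeomorph.existsUnique_continuousMap_lifts f a₀ _
    hlift₀ (fun γ hγ => ?_) fun γ γ' Γ Γ' _ _ hΓ₀ hΓ₀' hΓ hΓ' hend => ?_).exists.elim
      fun F hF => hlog ⟨F, F.continuous.continuousOn,
        fun a _ => congrArg Subtype.val (congrFun hF.2 a)⟩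
  · obtain ⟨Γ, hΓ, hΓ₀⟩ := Complex.isCoveringMap_exp.exists_path_lifts (f.comp γ)
      (Complex.log (g a₀)) (by rw [hlift₀, ← hγ]; rfl)
    exact ⟨Γ, hΓ₀, hΓ⟩
  · have hexp {γ : C(unitInterval, A)} {Γ : C(unitInterval, ℂ)}
        (hΓ : (fun z : ℂ => (⟨_, z.exp_ne_zero⟩ : {z : ℂ // z ≠ 0})) ∘ Γ = f.comp γ)
        (t : unitInterval) : Complex.exp (Γ t) = g (γ t) :=
      congrArg Subtype.val (congrFun hΓ t)
    by_contra hne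
    refine hunique _ _ hne ((hexp hΓ 1).trans (hend ▸ (hexp hΓ' 1).symm)) ?_
    have hjoined : JoinedIn (Complex.exp ⁻¹' range g) (Γ 0) (Γ 1) :=
      ⟨⟨Γ, rfl, rfl⟩, fun t => ⟨γ t, (hexp hΓ t).symm⟩⟩
    have hjoined' : JoinedIn (Complex.exp ⁻¹' range g) (Γ' 0) (Γ' 1) :=
      ⟨⟨Γ', rfl, rfl⟩, fun t => ⟨γ' t, (hexp hΓ' t).symm⟩⟩
    rw [hΓ₀] at hjoined
    rw [hΓ₀'] at hjoined'
    exact hjoined.symm.trans hjoined'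

/-! ### Injective paths -/

section Arc

open unitInterval

theorem exists_mem_disjoint_of_disjoint_sInter {T : Type*} [TopologicalSpace T] {K : Set T}
    (hK : IsCompact K) {c : Set (Set T)} (hc : ∀ F ∈ c, IsClosed F) (hchain : IsChain (· ⊆ ·) c)
    (hne : c.Nonempty) (hdisj : Disjoint (⋂₀ c) K) : ∃ F ∈ c, Disjoint F K := by
  have : Nonempty c := hne.to_subtype
  have hdir : Directed (· ⊇ ·) (Subtype.val : c → Set T) := fun F G =>
    (hchain.total F.2 G.2).elim (fun h => ⟨F, Subset.rfl, h⟩) fun h => ⟨G, h, Subset.rfl⟩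
  rw [sInter_eq_iInter, disjoint_comm, disjoint_iff_inter_eq_empty] at hdisj
  obtain ⟨F, hF⟩ := hK.elim_directed_family_closed (Subtype.val : c → Set T)
    (fun F : c => hc F.1 F.2) hdisj hdir
  exact ⟨F, F.2, (disjoint_iff_inter_eq_empty.2 hF).symm⟩

/-- A closed set of parameters that remains after loops of the path `k` have been cut out: `k` takes
the same value at the two ends of every complementary gap. -/
structure IsShortcut {Y : Type*} (k : I → Y) (E : Set I) : Prop where
  isClosed : IsClosed E
  zero_mem : 0 ∈ E
  one_mem : 1 ∈ E
  eq_of_disjoint_Ioo :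
    ∀ {a b : I}, a ∈ E → b ∈ E → a < b → Disjoint E (Ioo a b) → k a = k b

namespace IsShortcut

variable {Y : Type*} {k : I → Y} {E : Set I} {a b : I}

theorem of_univ (k : I → Y) : IsShortcut k univ where
  isClosed := isClosed_univ
  zero_mem := mem_univ _
  one_mem := mem_univ _
  eq_of_disjoint_Ioo _ _ hab hdisj :=
    absurd (univ_disjoint.1 hdisj) (nonempty_Ioo.2 hab).ne_empty

theorem exists_eq_of_disjoint_Icc (hE : IsShortcut k E) (ha : a ∈ E) (hb : b ∈ E) {u v : I}
    (hau : a ≤ u) (huv : u ≤ v) (hvb : v ≤ b) (hdisj : Disjoint E (Icc u v)) :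
    ∃ s ∈ Icc a u, ∃ t ∈ Icc v b, k s = k t := by
  obtain ⟨s, ⟨hsE, hs⟩, hmax⟩ := (hE.isClosed.inter isClosed_Icc).isCompact.exists_isGreatest
    ⟨a, ha, left_mem_Icc.2 hau⟩
  obtain ⟨t, ⟨htE, ht⟩, hmin⟩ := (hE.isClosed.inter isClosed_Icc).isCompact.exists_isLeast
    ⟨b, hb, right_mem_Icc.2 hvb⟩
  have hst : s < t := (hs.2.trans (huv.trans ht.1)).lt_of_ne fun h =>
    disjoint_left.1 hdisj hsE ⟨h ▸ huv.trans ht.1, hs.2.trans huv⟩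
  refine ⟨s, hs, t, ht, hE.eq_of_disjoint_Ioo hsE htE hst (disjoint_left.2 fun e he hest => ?_)⟩
  rcases le_total e u with heu | hue
  · exact hest.1.not_ge (hmax ⟨he, hs.1.trans hest.1.le, heu⟩)
  rcases le_total e v with hev | hve
  · exact disjoint_left.1 hdisj he ⟨hue, hev⟩
  · exact hest.2.not_ge (hmin ⟨he, hve, hest.2.le.trans ht.2⟩)

theorem sInter [TopologicalSpace Y] [T2Space Y] (hk : Continuous k) {c : Set (Set I)}
    (hc : ∀ F ∈ c, IsShortcut k F) (hchain : IsChain (· ⊆ ·) c) (hne : c.Nonempty) :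
    IsShortcut k (⋂₀ c) where
  isClosed := isClosed_sInter fun F hF => (hc F hF).isClosed
  zero_mem := fun F hF => (hc F hF).zero_mem
  one_mem := fun F hF => (hc F hF).one_mem
  eq_of_disjoint_Ioo {a b} ha hb hab hdisj := by
    by_contra hkab
    obtain ⟨U, V, hU, hV, haU, hbV, hUV⟩ := t2_separation hkab
    obtain ⟨m, ham, hmb⟩ := exists_between hab
    obtain ⟨u', hu', huU⟩ := (mem_nhdsGE_iff_exists_mem_Ioc_Ico_subset ham).1
      (mem_nhdsWithin_of_mem_nhds ((hU.preimage hk).mem_nhds haU))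
    obtain ⟨v', hv', hvV⟩ := (mem_nhdsLE_iff_exists_mem_Ico_Ioc_subset hmb).1
      (mem_nhdsWithin_of_mem_nhds ((hV.preimage hk).mem_nhds hbV))
    obtain ⟨u, hau, huu'⟩ := exists_between hu'.1
    obtain ⟨v, hvv', hvb⟩ := exists_between hv'.2
    obtain ⟨F, hF, hFdisj⟩ := exists_mem_disjoint_of_disjoint_sInter isCompact_Icc
      (fun F hF => (hc F hF).isClosed) hchain hne (hdisj.mono_right (Icc_subset_Ioo hau hvb))
    obtain ⟨s, hs, t, ht, hst⟩ := (hc F hF).exists_eq_of_disjoint_Icc (ha F hF) (hb F hF) hau.le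
      (huu'.le.trans (hu'.2.trans (hv'.1.trans hvv'.le))) hvb.le hFdisj
    exact hUV.ne_of_mem (huU ⟨hs.1, hs.2.trans_lt huu'⟩) (hvV ⟨hvv'.trans_le ht.1, ht.2⟩) hst

theorem exists_minimal [TopologicalSpace Y] [T2Space Y] (hk : Continuous k) :
    ∃ E, Minimal (IsShortcut k) E := by
  refine zorn_superset {E | IsShortcut k E} fun c hc hchain => ?_
  rcases c.eq_empty_or_nonempty with rfl | hne
  · exact ⟨univ, of_univ k, fun s hs => absurd hs (notMem_empty s)⟩
  · exact ⟨⋂₀ c, sInter hk hc hchain hne, fun s hs => sInter_subset_of_mem hs⟩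

theorem diff_Ioo (hE : IsShortcut k E) (ha : a ∈ E) (hb : b ∈ E) (hkab : k a = k b) :
    IsShortcut k (E \ Ioo a b) where
  isClosed := hE.isClosed.sdiff isOpen_Ioo
  zero_mem := ⟨hE.zero_mem, fun h => not_lt_bot h.1⟩
  one_mem := ⟨hE.one_mem, fun h => not_top_lt h.2⟩
  eq_of_disjoint_Ioo {c d} hc hd hcd hdisj := by
    by_cases hgap : Disjoint E (Ioo c d)
    · exact hE.eq_of_disjoint_Ioo hc.1 hd.1 hcd hgap
    obtain ⟨e, he, hce, hed⟩ := not_disjoint_iff.1 hgap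
    have hmem {x : I} (hx : x ∈ E) (hxcd : x ∈ Ioo c d) : x ∈ Ioo a b := by
      by_contra hxab
      exact disjoint_left.1 hdisj ⟨hx, hxab⟩ hxcd
    have heab : e ∈ Ioo a b := hmem he ⟨hce, hed⟩
    have hca : c = a := le_antisymm
      (not_lt.1 fun hac => hc.2 ⟨hac, hce.trans heab.2⟩)
      (not_lt.1 fun hca => lt_irrefl a (hmem ha ⟨hca, heab.1.trans hed⟩).1)
    have hdb : d = b := le_antisymm
      (not_lt.1 fun hbd => lt_irrefl b (hmem hb ⟨hce.trans heab.2, hbd⟩).2)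
      (not_lt.1 fun hdb => hd.2 ⟨heab.1.trans hed, hdb⟩)
    rw [hca, hdb, hkab]

theorem disjoint_Ioo_of_minimal (hE : Minimal (IsShortcut k) E) (ha : a ∈ E) (hb : b ∈ E)
    (hkab : k a = k b) : Disjoint E (Ioo a b) :=
  (subset_sdiff.1 (hE.2 (hE.1.diff_Ioo ha hb hkab) sdiff_subset)).2

theorem isClosed_disjoint_uIoo (hE : IsClosed E) :
    IsClosed {q : I × I | q.2 ∈ E ∧ Disjoint E (uIoo q.1 q.2)} := by
  have hcompl : {q : I × I | Disjoint E (uIoo q.1 q.2)} =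
      ⋂ f ∈ E, ({q | q.1 ⊓ q.2 < f} ∩ {q | f < q.1 ⊔ q.2})ᶜ := by
    ext q
    simp only [uIoo, disjoint_left, mem_ofPred_eq, mem_iInter, mem_compl_iff, mem_inter_iff,
      mem_Ioo]
  have hclosed : IsClosed {q : I × I | Disjoint E (uIoo q.1 q.2)} := by
    rw [hcompl]
    exact isClosed_biInter fun f _ => ((isOpen_lt (by fun_prop) continuous_const).inter
      (isOpen_lt continuous_const (by fun_prop))).isClosed_compl
  exact (hE.preimage continuous_snd).inter hclosed

theorem eq_of_disjoint_uIoo (hE : IsShortcut k E) (ha : a ∈ E) (hb : b ∈ E)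
    (hdisj : Disjoint E (uIoo a b)) : k a = k b := by
  wlog hab : a ≤ b generalizing a b
  · exact (this hb ha (uIoo_comm a b ▸ hdisj) (le_of_not_ge hab)).symm
  rcases hab.eq_or_lt with rfl | hlt
  · rfl
  · exact hE.eq_of_disjoint_Ioo ha hb hlt (uIoo_of_le hab ▸ hdisj)

theorem eq_of_disjoint_uIoo_of_disjoint_uIoo (hE : IsShortcut k E) (ha : a ∈ E) (hb : b ∈ E) {t : I}
    (hta : Disjoint E (uIoo t a)) (htb : Disjoint E (uIoo t b)) : k a = k b := by
  by_cases ht : t ∈ E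
  · exact (hE.eq_of_disjoint_uIoo ht ha hta).symm.trans (hE.eq_of_disjoint_uIoo ht hb htb)
  refine hE.eq_of_disjoint_uIoo ha hb (disjoint_left.2 fun e he hab => ?_)
  have hte : e ≠ t := fun h => ht (h ▸ he)
  have hta := disjoint_left.1 hta he
  have htb := disjoint_left.1 htb he
  simp only [uIoo, mem_Ioo, inf_lt_iff, lt_sup_iff] at hab hta htb
  grind

theorem continuous_comp_of_isGreatest [TopologicalSpace Y] (hk : Continuous k)
    (hE : IsShortcut k E) {s : I → I} (hs : ∀ t, IsGreatest (E ∩ Iic t) (s t)) :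
    Continuous (k ∘ s) := by
  have hadj (t : I) : Disjoint E (uIoo t (s t)) := by
    rw [uIoo_of_ge (hs t).1.2]
    exact disjoint_left.2 fun e he hest => hest.1.not_ge ((hs t).2 ⟨he, hest.2.le⟩)
  exact continuous_of_isClosed_rel (isClosed_disjoint_uIoo hE.isClosed) hk
    (fun t => ⟨s t, (hs t).1.1, hadj t⟩) fun t e he =>
      hE.eq_of_disjoint_uIoo_of_disjoint_uIoo (hs t).1.1 he.1 (hadj t) he.2

end IsShortcut

/-- A path all of whose fibres are intervals, obtained from `γ` by cutting out a maximal family of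
loops. -/
theorem exists_path_ordConnected_fibres {Y : Type*} [TopologicalSpace Y] [T2Space Y]
    {x y : Y} (γ : Path x y) :
    ∃ h : Path x y, range h ⊆ range γ ∧ ∀ {a t b : I}, a ≤ t → t ≤ b → h a = h b → h t = h a := by
  obtain ⟨E, hE⟩ := IsShortcut.exists_minimal γ.continuous
  have hex (t : I) : ∃ s, IsGreatest (E ∩ Iic t) s :=
    (hE.1.isClosed.inter isClosed_Iic).isCompact.exists_isGreatest
      ⟨0, hE.1.zero_mem, unitInterval.nonneg t⟩
  choose s hs using hex
  have hmono : Monotone s := fun t u htu => (hs u).2 ⟨(hs t).1.1, (hs t).1.2.trans htu⟩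
  have hfix {t : I} (ht : t ∈ E) : s t = t := le_antisymm (hs t).1.2 ((hs t).2 ⟨ht, le_refl t⟩)
  refine ⟨⟨⟨γ ∘ s, hE.1.continuous_comp_of_isGreatest γ.continuous hs⟩, ?_, ?_⟩, ?_, ?_⟩
  · simp [hfix hE.1.zero_mem]
  · simp [hfix hE.1.one_mem]
  · exact range_comp_subset_range s γ
  · intro a t b hat htb hab
    change γ (s t) = γ (s a)
    rcases (hmono hat).eq_or_lt with h | h
    · rw [h]
    rcases (hmono htb).eq_or_lt with h' | h'
    · rw [h']
      exact hab.symm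
    exact absurd ⟨h, h'⟩ (disjoint_left.1
      (IsShortcut.disjoint_Ioo_of_minimal hE (hs a).1.1 (hs b).1.1 hab) (hs t).1.1)

/-- The distance from `h r` to the initial segment of the path `h` ending at parameter `x`. -/
noncomputable def distInitial {Y : Type*} [PseudoMetricSpace Y] (h : I → Y) (x r : I) : ℝ :=
  sInf ((fun s : I => dist (h r) (h (s ⊓ x))) '' univ)

section distInitial

variable {Y : Type*} [MetricSpace Y] {h : I → Y} {x y : I}

theorem continuous_distInitial (hh : Continuous h) :
    Continuous fun q : I × I => distInitial h q.1 q.2 :=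
  isCompact_univ.continuous_sInf (f := fun q : I × I => fun s => dist (h q.2) (h (s ⊓ q.1)))
    (by dsimp [Function.HasUncurry.uncurry]; fun_prop)

theorem exists_distInitial_eq (hh : Continuous h) (x r : I) :
    ∃ s ≤ x, distInitial h x r = dist (h r) (h s) := by
  obtain ⟨s, -, hs⟩ := isCompact_univ.exists_sInf_image_eq univ_nonempty
    (f := fun s : I => dist (h r) (h (s ⊓ x))) (by fun_prop)
  exact ⟨s ⊓ x, inf_le_right, hs⟩

theorem distInitial_le {s : I} (hs : s ≤ x) (r : I) : distInitial h x r ≤ dist (h r) (h s) :=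
  csInf_le ⟨0, by rintro _ ⟨s, -, rfl⟩; exact dist_nonneg⟩
    ⟨s, mem_univ s, by simp only [inf_of_le_left hs]⟩

theorem distInitial_antitone (hh : Continuous h) (hxy : x ≤ y) (r : I) :
    distInitial h y r ≤ distInitial h x r := by
  obtain ⟨s, hsx, hs⟩ := exists_distInitial_eq hh x r
  exact (distInitial_le (hsx.trans hxy) r).trans hs.ge

theorem distInitial_eq_of_eq (hh : Continuous h)
    (hfib : ∀ {a t b : I}, a ≤ t → t ≤ b → h a = h b → h t = h a) (hxy : x ≤ y)
    (heq : h x = h y) (r : I) : distInitial h x r = distInitial h y r := by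
  refine le_antisymm ?_ (distInitial_antitone hh hxy r)
  obtain ⟨s, hsy, hs⟩ := exists_distInitial_eq hh y r
  rw [hs]
  rcases le_total s x with hsx | hxs
  · exact distInitial_le hsx r
  · rw [hfib hxs hsy heq]
    exact distInitial_le le_rfl r

theorem distInitial_lt_of_ne (hh : Continuous h)
    (hfib : ∀ {a t b : I}, a ≤ t → t ≤ b → h a = h b → h t = h a) (hxy : x ≤ y)
    (hne : h x ≠ h y) : distInitial h y y < distInitial h x y := by
  obtain ⟨s, hsx, hs⟩ := exists_distInitial_eq hh x y
  rw [hs]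
  refine ((distInitial_le le_rfl y).trans (dist_self _).le).trans_lt (dist_pos.2 fun hys => hne ?_)
  exact (hfib hsx hxy hys.symm).trans hys.symm

end distInitial

/-- The average distance from a point of the path to the initial segment ending at `x` decreases
with `x`, strictly so as soon as the segment grows. -/
theorem exists_continuous_antitone_eq_iff {Y : Type*} [MetricSpace Y] {h : I → Y}
    (hh : Continuous h) (hfib : ∀ {a t b : I}, a ≤ t → t ≤ b → h a = h b → h t = h a) :
    ∃ τ : I → ℝ, Continuous τ ∧ Antitone τ ∧ ∀ x y, τ x = τ y ↔ h x = h y := by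
  let D (x : I) (r : ℝ) : ℝ := IccExtend zero_le_one (distInitial h x) r
  have hD : Continuous (Function.uncurry D) :=
    (continuous_distInitial hh).comp <| continuous_fst.prodMk <|
      (continuous_projIcc (h := zero_le_one)).comp continuous_snd
  have hDr (x : I) : Continuous (D x) := hD.comp (by fun_prop : Continuous fun r => (x, r))
  have hanti : Antitone fun x => ∫ r in (0 : ℝ)..1, D x r := fun x y hxy =>
    intervalIntegral.integral_mono_on zero_le_one ((hDr y).intervalIntegrable 0 1)
      ((hDr x).intervalIntegrable 0 1) fun r _ => distInitial_antitone hh hxy _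
  refine ⟨fun x => ∫ r in (0 : ℝ)..1, D x r,
    intervalIntegral.continuous_parametric_intervalIntegral_of_continuous' hD 0 1, hanti,
    fun x y => ?_⟩
  wlog hxy : x ≤ y generalizing x y
  · rw [eq_comm, this y x (le_of_not_ge hxy), eq_comm]
  refine ⟨fun heq => ?_, fun heq => ?_⟩
  · by_contra hne
    refine heq.not_gt (intervalIntegral.integral_lt_integral_of_continuousOn_of_le_of_exists_lt
      zero_lt_one (hDr y).continuousOn (hDr x).continuousOn
      (fun r _ => distInitial_antitone hh hxy _) ⟨y, y.2, ?_⟩)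
    simp only [D, IccExtend_val]
    exact distInitial_lt_of_ne hh hfib hxy hne
  · have hDxy : D x = D y := funext fun r => distInitial_eq_of_eq hh hfib hxy heq _
    simp only [hDxy]

theorem exists_injective_path {Y : Type*} [MetricSpace Y] {x y : Y} (γ : Path x y) (hxy : x ≠ y) :
    ∃ α : Path x y, Function.Injective α ∧ range α ⊆ range γ := by
  obtain ⟨h, hrange, hfib⟩ := exists_path_ordConnected_fibres γ
  obtain ⟨τ, hτ, hanti, hτh⟩ := exists_continuous_antitone_eq_iff h.continuous hfib
  have hpos : 0 < τ 0 - τ 1 := sub_pos.2 <| (hanti zero_le_one).lt_of_ne fun h10 =>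
    hxy (by simpa using ((hτh 1 0).1 h10).symm)
  have hex (u : I) : ∃ t, τ t = τ 0 - u * (τ 0 - τ 1) := by
    obtain ⟨t, -, ht⟩ := intermediate_value_Icc' (zero_le_one (α := I)) hτ.continuousOn
      (show τ 0 - u * (τ 0 - τ 1) ∈ Icc (τ 1) (τ 0) by
        constructor <;> nlinarith [u.2.1, u.2.2])
    exact ⟨t, ht⟩
  choose s hs using hex
  have hcont : Continuous (h ∘ s) := by
    refine continuous_of_isClosed_rel (R := {q : I × I | τ q.2 = τ 0 - q.1 * (τ 0 - τ 1)})
      (isClosed_eq (by fun_prop) (by fun_prop)) h.continuous (fun u => ⟨s u, hs u⟩)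
      fun u t hut => (hτh _ _).1 ((hs u).trans hut.symm)
  refine ⟨⟨⟨h ∘ s, hcont⟩, ?_, ?_⟩, fun u v huv => ?_, (range_comp_subset_range s h).trans hrange⟩
  · exact ((hτh _ _).1 (by simp [hs])).trans h.source
  · exact ((hτh _ _).1 (by simp [hs])).trans h.target
  · have hτuv := (hτh _ _).2 huv
    rw [hs, hs, sub_right_inj, mul_left_inj' hpos.ne'] at hτuv
    exact Subtype.ext hτuv

end Arc

/-! ### Shortest loops around a point -/

theorem hasLogOn_sub_div_sub {K C : Set ℂ} (hK : IsCompact K) (hC : IsPreconnected C)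
    (hdisj : Disjoint K C) {u v : ℂ} (hu : u ∈ C) (hv : v ∈ C) :
    HasLogOn (fun z => (z - u) / (z - v)) K := by
  have hne {z x : ℂ} (hz : z ∈ K) (hx : x ∈ C) : z - x ≠ 0 :=
    sub_ne_zero.2 (hdisj.ne_of_mem hz hx)
  refine hC.induction₂ (fun x y => HasLogOn (fun z => (z - x) / (z - y)) K) (fun x hx => ?_)
    (fun x y w _ hy _ hxy hyw => (hxy.mul hyw).congr fun z hz =>
      (div_mul_div_cancel₀ (hne hz hy)).symm)
    (fun x y _ _ hxy => (hxy.zpow (-1)).congr fun z _ => by simp only [zpow_neg_one, inv_div]) hu hv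
  have hxK : Kᶜ ∈ 𝓝 x := hK.isClosed.isOpen_compl.mem_nhds (disjoint_right.1 hdisj hx)
  obtain ⟨ε, hε, hball⟩ := Metric.mem_nhds_iff.1 hxK
  filter_upwards [self_mem_nhdsWithin, mem_nhdsWithin_of_mem_nhds (Metric.ball_mem_nhds x
    (half_pos hε))] with y hy hyx
  refine HasLogOn.of_mem_slitPlane (ContinuousOn.div (by fun_prop) (by fun_prop)
    fun z hz => hne hz hy) fun z hz => div_mem_slitPlane_of_norm_sub_lt ?_
  have hεz : ε ≤ dist z x := not_lt.1 fun h => hball h hz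
  rw [sub_sub_sub_cancel_left, ← dist_eq_norm, ← dist_eq_norm]
  rw [Metric.mem_ball] at hyx
  linarith [dist_triangle z y x]

theorem hasLogOn_sub_of_isPreconnected {K C : Set ℂ} (hK : IsCompact K) (hC : IsPreconnected C)
    (hdisj : Disjoint K C) {u v : ℂ} (hu : u ∈ C) (hv : v ∈ C)
    (hlt : ∀ z ∈ K, ‖z - u‖ < ‖v - u‖) : HasLogOn (fun z => z - u) K := by
  rcases K.eq_empty_or_nonempty with rfl | ⟨z₀, hz₀⟩
  · exact ⟨0, continuousOn_empty _, fun _ hz => hz.elim⟩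
  have huv : u - v ≠ 0 := norm_ne_zero_iff.1
    ((norm_nonneg _).trans_lt ((hlt z₀ hz₀).trans_eq (norm_sub_rev v u))).ne'
  have hfar : HasLogOn (fun z => z - v) K :=
    (HasLogOn.const huv).of_norm_sub_lt (by fun_prop) fun z hz => by
      simpa only [sub_sub_sub_cancel_right, norm_sub_rev u v] using hlt z hz
  exact ((hasLogOn_sub_div_sub hK hC hdisj hu hv).mul hfar).congr fun z hz =>
    (div_mul_cancel₀ _ (hfar.ne_zero hz)).symm

/-- If `K` missed `ζ K`, then the point `0` could escape to infinity in the complement of `K`: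
first radially to a point of `ζ K` of least modulus, then inside `ζ K` to one of largest modulus,
and from there radially again. -/
theorem exists_mem_mul_mem_of_not_hasLogOn {K : Set ℂ} (hK : IsCompact K)
    (hconn : IsPreconnected K) (hlog : ¬ HasLogOn (fun z => z) K) {ζ : ℂ} (hζ : ‖ζ‖ = 1) :
    ∃ z ∈ K, ζ * z ∈ K := by
  by_contra! hrot
  rcases K.eq_empty_or_nonempty with rfl | hne
  · exact hlog ⟨0, continuousOn_empty _, fun _ hz => hz.elim⟩
  obtain ⟨q, hq, hmin⟩ := hK.exists_isMinOn hne continuous_norm.continuousOn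
  obtain ⟨Q, hQ, hmax⟩ := hK.exists_isMaxOn hne continuous_norm.continuousOn
  have hpos {z : ℂ} (hz : z ∈ K) : 0 < ‖z‖ :=
    norm_pos_iff.2 fun h0 => hrot z hz (by rwa [h0, mul_zero, ← h0])
  let ray (z : ℂ) (t : ℝ) : ℂ := t * (ζ * z)
  have hray (z : ℂ) {t : ℝ} (ht : 0 ≤ t) : ‖ray z t‖ = t * ‖z‖ := by
    rw [norm_mul, norm_mul, hζ, one_mul, Complex.norm_of_nonneg ht]
  have hrayone (z : ℂ) : ray z 1 = ζ * z := by simp only [ray, Complex.ofReal_one, one_mul]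
  have hinner : ray q '' Icc 0 1 ⊆ Kᶜ := by
    rintro _ ⟨t, ht, rfl⟩ hmem
    rcases ht.2.eq_or_lt with rfl | hlt
    · exact hrot q hq (hrayone q ▸ hmem)
    · exact (mul_lt_of_lt_one_left (hpos hq) hlt).not_ge (hray q ht.1 ▸ hmin hmem)
  have houter : ray Q '' Icc 1 2 ⊆ Kᶜ := by
    rintro _ ⟨t, ht, rfl⟩ hmem
    rcases ht.1.eq_or_lt with rfl | hlt
    · exact hrot Q hQ (hrayone Q ▸ hmem)
    · exact (lt_mul_of_one_lt_left (hpos hQ) hlt).not_ge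
        (hray Q (zero_le_one.trans ht.1) ▸ hmax hmem)
  have hrayconn (z : ℂ) (a b : ℝ) : IsPreconnected (ray z '' Icc a b) :=
    isPreconnected_Icc.image _ (by fun_prop)
  have hC : IsPreconnected (ray q '' Icc 0 1 ∪ (ζ * ·) '' K ∪ ray Q '' Icc 1 2) :=
    .union (ζ * Q) (Or.inr ⟨Q, hQ, rfl⟩) ⟨1, by simp, hrayone Q⟩
      (.union (ζ * q) ⟨1, by simp, hrayone q⟩ ⟨q, hq, rfl⟩ (hrayconn q 0 1)
        (hconn.image _ (by fun_prop))) (hrayconn Q 1 2)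
  have hsub : Disjoint K (ray q '' Icc 0 1 ∪ (ζ * ·) '' K ∪ ray Q '' Icc 1 2) :=
    subset_compl_iff_disjoint_left.1
      (union_subset (union_subset hinner (image_subset_iff.2 hrot)) houter)
  refine hlog ((hasLogOn_sub_of_isPreconnected (u := 0) (v := ray Q 2) hK hC hsub
    (Or.inl (Or.inl ⟨0, by simp, by simp [ray]⟩)) (Or.inr ⟨2, by simp, rfl⟩) fun z hz => ?_).congr
    fun z _ => (sub_zero z).symm)
  rw [sub_zero, sub_zero, hray Q zero_le_two]
  linarith [hpos hQ, show ‖z‖ ≤ ‖Q‖ from hmax hz]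

theorem not_hasLogOn_image_exp_div {α : ℝ → ℂ} {a b : ℝ} {k : ℤ} (hα : ContinuousOn α (Icc a b))
    (hab : a ≤ b) (hk : k ≠ 0) (hkab : α b = α a + k * (2 * Real.pi * Complex.I)) :
    ¬ HasLogOn (fun z => z) ((fun t => Complex.exp (α t / k)) '' Icc a b) := by
  rintro ⟨l, hl, hlog⟩
  have hk' : (k : ℂ) ≠ 0 := Int.cast_ne_zero.2 hk
  have hexp : ContinuousOn (fun t => Complex.exp (α t / k)) (Icc a b) := (hα.div_const _).cexp
  have hconst := eq_of_exp_comp_const (m := fun t => l (Complex.exp (α t / k)) - α t / k) (c := 1)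
    isPreconnected_Icc ((hl.comp hexp (mapsTo_image _ _)).sub (hα.div_const _))
    (fun t ht => by
      rw [Complex.exp_sub, hlog _ (mem_image_of_mem _ ht), div_self (Complex.exp_ne_zero _)])
    (left_mem_Icc.2 hab) (right_mem_Icc.2 hab)
  have hdiv : α b / k = α a / k + 2 * Real.pi * Complex.I := by
    rw [hkab, add_div, mul_div_cancel_left₀ _ hk']
  simp only [hdiv, Complex.exp_periodic _, sub_right_inj, left_eq_add] at hconst
  exact Complex.two_pi_I_ne_zero hconst

/-- The loop `exp (α / k)` winds once around `0`, so it meets its image under rotation by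
`2π / k`. -/
theorem exists_chord {α : ℝ → ℂ} {a b : ℝ} {k : ℤ} (hα : ContinuousOn α (Icc a b)) (hab : a ≤ b)
    (hk : k ≠ 0) (hkab : α b = α a + k * (2 * Real.pi * Complex.I)) :
    ∃ s ∈ Icc a b, ∃ t ∈ Icc a b, ∃ m : ℤ,
      α t = α s + (1 + m * k : ℤ) * (2 * Real.pi * Complex.I) := by
  have hexp : ContinuousOn (fun t => Complex.exp (α t / k)) (Icc a b) := (hα.div_const _).cexp
  obtain ⟨_, ⟨s, hs, rfl⟩, t, ht, hst⟩ := exists_mem_mul_mem_of_not_hasLogOn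
    (isCompact_Icc.image_of_continuousOn hexp) (isPreconnected_Icc.image _ hexp)
    (not_hasLogOn_image_exp_div hα hab hk hkab)
    (Complex.norm_exp_ofReal_mul_I (2 * Real.pi / k))
  rw [← Complex.exp_add, Complex.exp_eq_exp_iff_exists_int] at hst
  obtain ⟨m, hm⟩ := hst
  refine ⟨s, hs, t, ht, m, ?_⟩
  have hk' : (k : ℂ) ≠ 0 := Int.cast_ne_zero.2 hk
  rw [div_eq_iff hk'] at hm
  rw [hm]
  push_cast
  field_simp
  ring

theorem two_pi_le_norm_sub {u v : ℂ} (huv : u ≠ v) (hexp : Complex.exp u = Complex.exp v) :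
    2 * Real.pi ≤ ‖u - v‖ := by
  obtain ⟨n, rfl⟩ := Complex.exp_eq_exp_iff_exists_int.1 hexp
  have hn : n ≠ 0 := by
    rintro rfl
    simp at huv
  have hone : (1 : ℝ) ≤ |(n : ℝ)| := mod_cast Int.one_le_abs hn
  rw [add_sub_cancel_left]
  simpa [abs_of_pos Real.pi_pos] using le_mul_of_one_le_left Real.two_pi_pos.le hone

theorem isClosed_exp_eq_and_ne :
    IsClosed {q : ℂ × ℂ | Complex.exp q.1 = Complex.exp q.2 ∧ q.1 ≠ q.2} := by
  have heq : {q : ℂ × ℂ | Complex.exp q.1 = Complex.exp q.2 ∧ q.1 ≠ q.2} =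
      {q | Complex.exp q.1 = Complex.exp q.2} ∩ {q | 2 * Real.pi ≤ ‖q.1 - q.2‖} := by
    ext q
    refine and_congr_right fun hq => ⟨fun hne => two_pi_le_norm_sub hne hq, fun hle h => ?_⟩
    rw [mem_ofPred_eq, h, sub_self, norm_zero] at hle
    exact Real.two_pi_pos.not_ge hle
  rw [heq]
  exact (isClosed_eq (by fun_prop) (by fun_prop)).inter (isClosed_le (by fun_prop) (by fun_prop))

/-- Distinct points of the path `α` with the same exponential have parameters in `[0, 1]` at
distance at least `δ`. -/
def ExpSeparated (α : ℝ → ℂ) (δ : ℝ) : Prop :=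
  ∀ s ∈ Icc (0 : ℝ) 1, ∀ t ∈ Icc (0 : ℝ) 1, Complex.exp (α s) = Complex.exp (α t) → α s ≠ α t →
    δ ≤ dist s t

namespace ExpSeparated

variable {α : ℝ → ℂ}

theorem exists_dist (hα : Continuous α)
    (hexp : Complex.exp (α 0) = Complex.exp (α 1)) (hne : α 0 ≠ α 1) :
    ∃ a ∈ Icc (0 : ℝ) 1, ∃ b ∈ Icc (0 : ℝ) 1, Complex.exp (α a) = Complex.exp (α b) ∧ α a ≠ α b ∧
      ExpSeparated α (dist a b) := by
  let D : Set (ℝ × ℝ) := Icc 0 1 ×ˢ Icc 0 1 ∩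
    {q | Complex.exp (α q.1) = Complex.exp (α q.2) ∧ α q.1 ≠ α q.2}
  have hD : IsCompact D := (isCompact_Icc.prod isCompact_Icc).inter_right <|
    isClosed_exp_eq_and_ne.preimage (f := fun q : ℝ × ℝ => (α q.1, α q.2)) (by fun_prop)
  obtain ⟨⟨a, b⟩, ⟨⟨ha, hb⟩, hab, hneab⟩, hmin⟩ := hD.exists_isMinOn
    ⟨(0, 1), ⟨by simp, by simp⟩, hexp, hne⟩ (f := fun q => dist q.1 q.2) (by fun_prop)
  exact ⟨a, ha, b, hb, hab, hneab, fun s hs t ht hst hnest =>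
    hmin (a := (s, t)) ⟨⟨hs, ht⟩, hst, hnest⟩⟩

theorem comp_lineMap {a b : ℝ} (h : ExpSeparated α (dist a b)) (ha : a ∈ Icc (0 : ℝ) 1)
    (hb : b ∈ Icc (0 : ℝ) 1) (hab : a ≠ b) :
    ExpSeparated (fun s => α (AffineMap.lineMap a b s)) 1 := fun s hs t ht hst hne =>
  one_le_of_le_mul_right₀ (dist_pos.2 hab) <|
    (h _ ((convex_Icc 0 1).lineMap_mem ha hb hs) _ ((convex_Icc 0 1).lineMap_mem ha hb ht)
      hst hne).trans_eq (dist_lineMap_lineMap a b s t)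

theorem eq_zero_one_or_eq_one_zero (h : ExpSeparated α 1) {s t : ℝ} (hs : s ∈ Icc (0 : ℝ) 1)
    (ht : t ∈ Icc (0 : ℝ) 1) (hst : Complex.exp (α s) = Complex.exp (α t)) (hne : α s ≠ α t) :
    s = 0 ∧ t = 1 ∨ s = 1 ∧ t = 0 := by
  have hdist := h s hs t ht hst hne
  rw [Real.dist_eq, le_abs] at hdist
  rcases hdist with hdist | hdist
  · exact Or.inr ⟨by linarith [hs.2, ht.1], by linarith [hs.2, ht.1]⟩
  · exact Or.inl ⟨by linarith [hs.1, ht.2], by linarith [hs.1, ht.2]⟩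

theorem injOn_exp (h : ExpSeparated α 1) (hinj : InjOn α (Icc 0 1)) :
    InjOn (fun t => Complex.exp (α t)) (Ico 0 1) := by
  intro s hs t ht hst
  by_contra hne
  have hs' := Ico_subset_Icc_self hs
  have ht' := Ico_subset_Icc_self ht
  rcases h.eq_zero_one_or_eq_one_zero hs' ht' hst (hinj.ne hs' ht' hne) with ⟨-, rfl⟩ | ⟨rfl, -⟩
  · exact lt_irrefl _ ht.2
  · exact lt_irrefl _ hs.2

theorem eq_add_or_eq_sub (h : ExpSeparated α 1) (hα : Continuous α)
    (hexp : Complex.exp (α 0) = Complex.exp (α 1)) (hne : α 0 ≠ α 1) :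
    α 1 = α 0 + 2 * Real.pi * Complex.I ∨ α 1 = α 0 - 2 * Real.pi * Complex.I := by
  obtain ⟨k, hk⟩ := Complex.exp_eq_exp_iff_exists_int.1 hexp.symm
  have hk0 : k ≠ 0 := by
    rintro rfl
    simp [hne.symm] at hk
  obtain ⟨s, hs, t, ht, m, hm⟩ := exists_chord hα.continuousOn zero_le_one hk0 hk
  have hinj {i j : ℤ} (hij : (i : ℂ) * (2 * Real.pi * Complex.I) =
      j * (2 * Real.pi * Complex.I)) : i = j := by
    exact_mod_cast mul_right_cancel₀ Complex.two_pi_I_ne_zero hij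
  suffices hdvd : k ∣ 1 by
    rcases Int.isUnit_iff.1 (isUnit_of_dvd_one hdvd) with rfl | rfl
    · exact Or.inl (by rw [hk, Int.cast_one, one_mul])
    · exact Or.inr (by rw [hk, Int.cast_neg, Int.cast_one, neg_one_mul, sub_eq_add_neg])
  by_cases hst : α s = α t
  · have hzero : 1 + m * k = 0 := hinj (by simpa [hst] using hm)
    exact ⟨-m, by linarith⟩
  have hexpst : Complex.exp (α s) = Complex.exp (α t) :=
    (Complex.exp_eq_exp_iff_exists_int.2 ⟨_, hm⟩).symm
  rcases h.eq_zero_one_or_eq_one_zero hs ht hexpst hst with ⟨rfl, rfl⟩ | ⟨rfl, rfl⟩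
  · have hkm : k = 1 + m * k := hinj (add_left_cancel (hk.symm.trans hm))
    exact ⟨1 - m, by linarith⟩
  · have hkm : -k = 1 + m * k := hinj (by
      rw [Int.cast_neg]
      linear_combination hm + hk)
    exact ⟨-1 - m, by linarith⟩

end ExpSeparated

theorem exists_eq_add_two_pi_I_expSeparated {α : ℝ → ℂ} (hα : Continuous α)
    (hexp : Complex.exp (α 0) = Complex.exp (α 1)) (hne : α 0 ≠ α 1) :
    ∃ a ∈ Icc (0 : ℝ) 1, ∃ b ∈ Icc (0 : ℝ) 1, α b = α a + 2 * Real.pi * Complex.I ∧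
      ExpSeparated α (dist a b) := by
  obtain ⟨a, ha, b, hb, hab, hneab, hsep⟩ := ExpSeparated.exists_dist hα hexp hne
  have hsep' := hsep.comp_lineMap ha hb fun h => hneab (congrArg α h)
  rcases hsep'.eq_add_or_eq_sub (hα.comp AffineMap.lineMap_continuous) (by simpa) (by simpa)
    with hplus | hminus
  · exact ⟨a, ha, b, hb, by simpa using hplus, hsep⟩
  · rw [dist_comm] at hsep
    exact ⟨b, hb, a, ha, by simpa [eq_sub_iff_add_eq, eq_comm] using hminus, hsep⟩

/-- The loop is the image of a shortest subpath of an arc whose ends are distinct points with the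
same exponential. -/
theorem exists_injOn_exp_comp {S : Set ℂ} {w w' : ℂ} (hne : w ≠ w')
    (hexp : Complex.exp w = Complex.exp w') (hjoined : JoinedIn S w w') :
    ∃ β : ℝ → ℂ, Continuous β ∧ (∀ t, β t ∈ S) ∧ β 1 = β 0 + 2 * Real.pi * Complex.I ∧
      InjOn (fun t => Complex.exp (β t)) (Ico 0 1) := by
  obtain ⟨γ, hγ⟩ := hjoined
  obtain ⟨α, hinj, hrange⟩ := exists_injective_path γ hne
  obtain ⟨a, ha, b, hb, hab, hsep⟩ := exists_eq_add_two_pi_I_expSeparated α.continuous_extend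
    (by simpa using hexp) (by simpa using hne)
  have hneab : a ≠ b := by
    rintro rfl
    exact Complex.two_pi_I_ne_zero (left_eq_add.1 hab)
  refine ⟨fun s => α.extend (AffineMap.lineMap a b s),
    α.continuous_extend.comp AffineMap.lineMap_continuous, fun t => ?_, by simpa,
    (hsep.comp_lineMap ha hb hneab).injOn_exp fun s hs t ht hst => ?_⟩
  · obtain ⟨s, hs⟩ := hrange (mem_range_self (projIcc 0 1 zero_le_one (AffineMap.lineMap a b t)))
    exact (hs ▸ hγ s : α _ ∈ S)
  · have hmem {s : ℝ} (hs : s ∈ Icc (0 : ℝ) 1) : AffineMap.lineMap a b s ∈ Icc (0 : ℝ) 1 :=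
      (convex_Icc 0 1).lineMap_mem ha hb hs
    simp only [Path.extend_apply _ (hmem hs), Path.extend_apply _ (hmem ht)] at hst
    exact AffineMap.lineMap_injective ℝ hneab (congrArg Subtype.val (hinj hst))

/-! ### Retracts and rotations -/

theorem HasFPP.hasPPP {Y : Type*} [TopologicalSpace Y] (h : HasFPP Y) : HasPPP Y := fun f hf =>
  let ⟨x, hx⟩ := h f hf
  ⟨x, 1, le_rfl, hx⟩

theorem HasFPP.of_leftInverse {Y Z : Type*} [TopologicalSpace Y] [TopologicalSpace Z] (h : HasFPP Z)
    {j : Y → Z} {ψ : Z → Y} (hj : Continuous j) (hψ : Continuous ψ)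
    (hψj : Function.LeftInverse ψ j) : HasFPP Y := fun f hf => by
  obtain ⟨z, hz⟩ := h (fun z => j (f (ψ z))) (by fun_prop)
  exact ⟨ψ z, by simpa only [hψj (f (ψ z))] using congrArg ψ hz⟩

theorem HasPPP.of_leftInverse {Y Z : Type*} [TopologicalSpace Y] [TopologicalSpace Z] (h : HasPPP Z)
    {j : Y → Z} {ψ : Z → Y} (hj : Continuous j) (hψ : Continuous ψ)
    (hψj : Function.LeftInverse ψ j) : HasPPP Y := fun f hf => by
  obtain ⟨z, n, hn, hz⟩ := h (fun z => j (f (ψ z))) (by fun_prop)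
  have hsemi : Function.Semiconj ψ (fun z => j (f (ψ z))) f := fun z => hψj (f (ψ z))
  exact ⟨ψ z, n, hn, by rw [← (hsemi.iterate_right n) z, hz]⟩

theorem not_hasPPP_addCircle {T : ℝ} (hT : T ≠ 0) : ¬ HasPPP (AddCircle T) := by
  intro h
  obtain ⟨x, n, hn, hx⟩ := h (fun u => u + ((√2 * T : ℝ) : AddCircle T)) (by fun_prop)
  rw [add_right_iterate_apply, add_eq_left, ← AddCircle.coe_nsmul,
    AddCircle.coe_eq_zero_iff] at hx
  obtain ⟨q, hq⟩ := hx
  refine (irrational_sqrt_two.natCast_mul (Nat.one_le_iff_ne_zero.1 hn)) ⟨q, ?_⟩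
  apply mul_right_cancel₀ hT
  simpa only [zsmul_eq_mul, nsmul_eq_mul, mul_assoc, Rat.cast_intCast] using hq

/-- The exponential factor is removed by extending its exponent from the curve to `Y`; the
argument of what remains is the retraction. -/
theorem exists_continuous_leftInverse_of_winding {Y : Type*} [TopologicalSpace Y] [T4Space Y]
    {T : ℝ} [Fact (0 < T)] {j : AddCircle T → Y} (hj : Continuous j)
    (hinj : Function.Injective j) {G : Y → ℂ} (hG : Continuous G) (hG0 : ∀ y, G y ≠ 0)
    {φ : AddCircle T → ℂ} (hφ : Continuous φ)
    (hGj : ∀ u, G (j u) = AddCircle.toCircle u * Complex.exp (φ u)) :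
    ∃ ψ : Y → AddCircle T, Continuous ψ ∧ Function.LeftInverse ψ j := by
  obtain ⟨Φ, hΦ⟩ := ContinuousMap.exists_extension' (hj.isClosedEmbedding hinj) ⟨φ, hφ⟩
  have hΦj (u) : Φ (j u) = φ u := congrFun hΦ u
  have hT : T ≠ 0 := (Fact.out : 0 < T).ne'
  let r : Y → ℂ := fun y => G y * Complex.exp (-Φ y)
  have hr : Continuous r := by fun_prop
  have hr0 (y) : (‖r y‖ : ℂ) ≠ 0 := mod_cast
    norm_ne_zero_iff.2 (mul_ne_zero (hG0 y) (Complex.exp_ne_zero _))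
  have hnorm (y) : r y / ‖r y‖ ∈ Submonoid.unitSphere ℂ := mem_sphere_zero_iff_norm.2 <| by
    rw [norm_div, Complex.norm_real, norm_norm, div_self (mod_cast hr0 y)]
  let c : Y → Circle := fun y => ⟨r y / ‖r y‖, hnorm y⟩
  have hc : Continuous c := (hr.div (by fun_prop) hr0).subtype_mk _
  have hrj (u) : r (j u) = AddCircle.toCircle u := by
    simp only [r, hGj, hΦj, mul_assoc, ← Complex.exp_add, add_neg_cancel, Complex.exp_zero,
      mul_one]
  refine ⟨fun y => (AddCircle.homeomorphCircle hT).symm (c y), by fun_prop, fun u => ?_⟩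
  rw [Homeomorph.symm_apply_eq, AddCircle.homeomorphCircle_apply]
  exact Circle.ext (by simp only [c, hrj, Circle.norm_coe, Complex.ofReal_one, div_one])

theorem exists_simpleClosedCurve_winding {X : Set ℂ} {p : ℂ} {β : ℝ → ℂ} (hβ : Continuous β)
    (hmem : ∀ t, p + Complex.exp (β t) ∈ X) (hturn : β 1 = β 0 + 2 * Real.pi * Complex.I)
    (hinj : InjOn (fun t => Complex.exp (β t)) (Ico 0 1)) :
    ∃ j : UnitAddCircle → X, Continuous j ∧ Function.Injective j ∧ ∃ φ : UnitAddCircle → ℂ,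
      Continuous φ ∧ ∀ u, (j u : ℂ) - p = AddCircle.toCircle u * Complex.exp (φ u) := by
  have hrep (u : UnitAddCircle) : ∃ t ∈ Ico (0 : ℝ) 1, (t : UnitAddCircle) = u := by
    have h := AddCircle.coe_image_Ico_eq (1 : ℝ) 0
    rw [zero_add] at h
    exact h.ge (mem_univ u)
  let γ : UnitAddCircle → ℂ := AddCircle.liftIco 1 0 fun t => p + Complex.exp (β t)
  let φ : UnitAddCircle → ℂ := AddCircle.liftIco 1 0 fun t => β t - 2 * Real.pi * Complex.I * t
  have hγt {t : ℝ} (ht : t ∈ Ico 0 1) : γ t = p + Complex.exp (β t) :=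
    AddCircle.liftIco_zero_coe_apply ht
  have hφt {t : ℝ} (ht : t ∈ Ico 0 1) : φ t = β t - 2 * Real.pi * Complex.I * t :=
    AddCircle.liftIco_zero_coe_apply ht
  have hγ : Continuous γ := by
    refine AddCircle.liftIco_zero_continuous ?_ (by fun_prop)
    rw [hturn, Complex.exp_periodic]
  have hφ : Continuous φ := by
    refine AddCircle.liftIco_zero_continuous ?_ (by fun_prop)
    simp only [hturn, Complex.ofReal_zero, Complex.ofReal_one, mul_zero, mul_one, sub_zero,
      add_sub_cancel_right]
  have hγX (u) : γ u ∈ X := by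
    obtain ⟨t, ht, rfl⟩ := hrep u
    exact hγt ht ▸ hmem t
  refine ⟨fun u => ⟨γ u, hγX u⟩, hγ.subtype_mk _, fun u v huv => ?_, φ, hφ, fun u => ?_⟩
  · obtain ⟨t, ht, rfl⟩ := hrep u
    obtain ⟨s, hs, rfl⟩ := hrep v
    have hts : p + Complex.exp (β t) = p + Complex.exp (β s) := by
      rw [← hγt ht, ← hγt hs]
      exact congrArg Subtype.val huv
    rw [hinj ht hs (add_left_cancel hts)]
  · obtain ⟨t, ht, rfl⟩ := hrep u
    simp only [hγt ht, hφt ht, add_sub_cancel_left, AddCircle.toCircle_apply_mk, Circle.coe_exp,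
      ← Complex.exp_add]
    congr 1
    push_cast
    ring

theorem not_hasPPP_of_not_hasLogOn_sub {X : Set ℂ} (hX : IsCompact X) (hconn : IsConnected X)
    [LocallyConnectedSpace X] {p : ℂ} (hp : p ∉ X) (hno : ¬ HasLogOn (fun z => z - p) X) :
    ¬ HasPPP X := by
  have : CompactSpace X := isCompact_iff_compactSpace.1 hX
  have : ConnectedSpace X := isConnected_iff_connectedSpace.1 hconn
  have : LocallyPathConnectedSpace X := locallyPathConnectedSpace_of_compact_metric
  have : PathConnectedSpace X := .of_locallyPathConnectedSpace
  have hne (x : X) : (x : ℂ) - p ≠ 0 := sub_ne_zero.2 fun h => hp (h ▸ x.2)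
  have hcont : Continuous fun x : X => (x : ℂ) - p := by fun_prop
  obtain ⟨w, w', hww', hexp, hjoined⟩ := exists_joinedIn_exp_preimage_range hcont hne
    (mt (hasLogOn_of_hasLogOn_univ (g := fun z => z - p)) hno)
  obtain ⟨β, hβ, hβX, hturn, hinj⟩ := exists_injOn_exp_comp hww' hexp hjoined
  have hmem (t) : p + Complex.exp (β t) ∈ X := by
    obtain ⟨x, hx⟩ := hβX t
    rw [← hx, add_sub_cancel]
    exact x.2
  obtain ⟨j, hj, hjinj, φ, hφ, hwind⟩ := exists_simpleClosedCurve_winding hβ hmem hturn hinj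
  obtain ⟨ψ, hψ, hψj⟩ := exists_continuous_leftInverse_of_winding hj hjinj hcont hne hφ hwind
  exact fun h => not_hasPPP_addCircle one_ne_zero (h.of_leftInverse hj hψ hψj)

theorem hasFPP_of_forall_hasLogOn_sub {X : Set ℂ} (hX : IsCompact X) (hconn : IsConnected X)
    [LocallyConnectedSpace X] (hlog : ∀ p ∉ X, HasLogOn (fun z => z - p) X) : HasFPP X := by
  intro f hf
  let F : ℂ → ℂ := Function.extend Subtype.val (fun x => (f x : ℂ)) 0
  have hFf (x : X) : F x = f x := Subtype.val_injective.extend_apply _ _ x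
  have hF : ContinuousOn F X := by
    rw [continuousOn_iff_continuous_domRestrict]
    exact (continuous_subtype_val.comp hf).congr fun x => (hFf x).symm
  have hmaps : MapsTo F X X := fun x hx => hFf ⟨x, hx⟩ ▸ (f ⟨x, hx⟩).2
  obtain ⟨x, hx, hfix⟩ := exists_fixedPoint_of_forall_hasLogOn hX hconn
    (fun _ => hasLogOn_of_forall_hasLogOn_sub hX hlog) hF hmaps
  exact ⟨⟨x, hx⟩, Subtype.ext ((hFf ⟨x, hx⟩).symm.trans hfix)⟩

theorem HasPPP.hasFPP_of_locallyConnected {X : Set ℂ} (hX : IsCompact X) (hconn : IsConnected X)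
    [LocallyConnectedSpace X] (h : HasPPP X) : HasFPP X :=
  hasFPP_of_forall_hasLogOn_sub hX hconn fun _ hp =>
    by_contra fun hno => not_hasPPP_of_not_hasLogOn_sub hX hconn hp hno h

/-- A locally connected continuum in the plane has the fixed point property iff it has the
periodic point property. -/
theorem stmt_0 (X : Set (EuclideanSpace ℝ (Fin 2)))
    (hcomp : IsCompact X) (hconn : IsConnected X)
    (hlc : LocallyConnectedSpace ↥X) :
    HasFPP ↥X ↔ HasPPP ↥X := by
  refine ⟨HasFPP.hasPPP, fun h => ?_⟩
  let e : EuclideanSpace ℝ (Fin 2) ≃ₜ ℂ := Complex.orthonormalBasisOneI.repr.symm.toHomeomorph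
  let e' : X ≃ₜ e '' X := e.image X
  have : LocallyConnectedSpace (e '' X) := e'.symm.isOpenEmbedding.locallyConnectedSpace
  have hP : HasPPP (e '' X) :=
    h.of_leftInverse e'.symm.continuous e'.continuous e'.apply_symm_apply
  have hF : HasFPP (e '' X) := hP.hasFPP_of_locallyConnected (hcomp.image e.continuous)
    (hconn.image e e.continuous.continuousOn)
  exact hF.of_leftInverse e'.continuous e'.symm.continuous e'.symm_apply_apply
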